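/- arXiv:2402.01625 — 4 statements merged into one kernel-verified Lean document; each statement's English description precedes it below -/
import Mathlib

section
/- Let h > 0, let ω > 0 be the unique positive solution of h = (x/2)·e^{x²/4}, and define U(η) = h·∫_η^ω e^{−s²/4} ds for η ∈ [0, ω]. Then (U, ω) solves the stationary problem (ODE-P): U''(η) + (η/2)·U'(η) = 0 for all η ∈ (0, ω); −U'(0) = h; U(ω) = 0; and ω/2 = −U'(ω). -/
/-!
The equation `U'' + p U' = 0` says that `-U'` is a solution of `v' = -p v`, that is, a multiple of
`exp (-P)` for a primitive `P` of `p`. Integrating back from the zero `b` of `U` gives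
`U η = c * ∫ s in η..b, exp (-P s)`. The flux `-U'` equals `c` wherever `P` vanishes, and the free
boundary condition prescribes its value `c * exp (-P b)` at `b`. Here `p η = η / 2`,
`P η = η ^ 2 / 4` and `b = ω`.
-/

/-- The solution of `U'' + P' U' = 0` that vanishes at `b` and has flux `-U' = c * exp (-P)`.
For `η > b` the integral is the oriented one, so the profile is defined on the whole line. -/
noncomputable def driftProfile (P : ℝ → ℝ) (c b η : ℝ) : ℝ :=
  c * ∫ s in η..b, Real.exp (-P s)

namespace driftProfile

variable {P : ℝ → ℝ} {c k p η : ℝ}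

lemma apply_right_endpoint (P : ℝ → ℝ) (c b : ℝ) : driftProfile P c b b = 0 := by
  simp [driftProfile]

lemma hasDerivAt (hP : Continuous P) (c b η : ℝ) :
    HasDerivAt (driftProfile P c b) (-(c * Real.exp (-P η))) η := by
  have hcont : Continuous fun s ↦ Real.exp (-P s) := by fun_prop
  have hint : HasDerivAt (fun u ↦ ∫ s in u..b, Real.exp (-P s)) (-Real.exp (-P η)) η :=
    intervalIntegral.integral_hasDerivAt_left (hcont.intervalIntegrable η b)
      (hcont.stronglyMeasurableAtFilter _ _) hcont.continuousAt
  rw [← mul_neg]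
  exact hint.const_mul c

lemma deriv_eq (hP : Continuous P) (c b : ℝ) :
    deriv (driftProfile P c b) = fun η ↦ -(c * Real.exp (-P η)) :=
  funext fun η ↦ (hasDerivAt hP c b η).deriv

lemma hasDerivAt_deriv (hP : Continuous P) (hp : HasDerivAt P p η) (c b : ℝ) :
    HasDerivAt (deriv (driftProfile P c b)) (-(p * deriv (driftProfile P c b) η)) η := by
  rw [deriv_eq hP]
  exact ((hp.fun_neg.exp.const_mul c).fun_neg).congr_deriv (by ring)

lemma deriv_deriv_add_mul_deriv_eq_zero (hP : Continuous P) (hp : HasDerivAt P p η) (c b : ℝ) :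
    deriv (deriv (driftProfile P c b)) η + p * deriv (driftProfile P c b) η = 0 := by
  rw [(hasDerivAt_deriv hP hp c b).deriv, neg_add_cancel]

lemma neg_deriv_of_eq_mul_exp (hP : Continuous P) (hc : c = k * Real.exp (P η)) (b : ℝ) :
    -deriv (driftProfile P c b) η = k := by
  rw [deriv_eq hP, neg_neg, hc, mul_assoc, ← Real.exp_add, add_neg_cancel, Real.exp_zero, mul_one]

end driftProfile

lemma hasDerivAt_sq_div_four (η : ℝ) : HasDerivAt (fun s : ℝ ↦ s ^ 2 / 4) (η / 2) η :=
  ((hasDerivAt_pow 2 η).div_const 4).congr_deriv (by push_cast; ring)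

/-- Let `h > 0`, let `ω > 0` be the unique positive solution of
`h = (x/2) * exp (x^2/4)`, and let `U η = h * ∫ s in η..ω, exp (-s^2/4)`.
Then `(U, ω)` solves the stationary problem (ODE-P):
`U'' + (η/2) U' = 0` on `(0, ω)`, `-U'(0) = h`, `U ω = 0`, `ω/2 = -U'(ω)`. -/
theorem stationary_profile_solves_ODE_P
    (h ω : ℝ) (hh : 0 < h) (hω : 0 < ω)
    (hroot : h = ω / 2 * Real.exp (ω ^ 2 / 4))
    (U : ℝ → ℝ)
    (hU : ∀ η, U η = h * ∫ s in η..ω, Real.exp (-s ^ 2 / 4)) :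
    (∀ η ∈ Set.Ioo 0 ω, deriv (deriv U) η + η / 2 * deriv U η = 0) ∧
    (-deriv U 0 = h) ∧ (U ω = 0) ∧ (ω / 2 = -deriv U ω) := by
  have hP : Continuous fun s : ℝ ↦ s ^ 2 / 4 := by fun_prop
  obtain rfl : U = driftProfile (fun s ↦ s ^ 2 / 4) h ω := by
    funext η
    simp only [hU, driftProfile, neg_div]
  exact ⟨fun η _ ↦ driftProfile.deriv_deriv_add_mul_deriv_eq_zero hP (hasDerivAt_sq_div_four η) h ω,
    driftProfile.neg_deriv_of_eq_mul_exp hP (by simp) ω,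
    driftProfile.apply_right_endpoint _ h ω,
    (driftProfile.neg_deriv_of_eq_mul_exp hP hroot ω).symm⟩
end

section
/- Let h > 0. If (W, ω') with ω' > 0 and W ∈ C²([0, ω']) solves the stationary problem: W''(η) + (η/2)·W'(η) = 0 on (0, ω'), −W'(0) = h, W(ω') = 0, and ω'/2 = −W'(ω'), then ω' is the unique positive root ω of h = (x/2)·e^{x²/4} and W(η) = h·∫_η^ω e^{−s²/4} ds for all η ∈ [0, ω]. -/
/-!
With the integrating factor `exp (η ^ 2 / 4)` the equation says that `W' η * exp (η ^ 2 / 4)` is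
constant, hence equal to its value `-h` at `0`. At `ω'` the free-boundary condition turns this into
`h = ω' / 2 * exp (ω' ^ 2 / 4)`, which determines `ω'` because the right-hand side is strictly
increasing in `ω'`; integrating `W' η = -h * exp (-η ^ 2 / 4)` from `η` to `ω'` gives `W`.
-/

open Set

section DampedEquation

variable {E : Type*} [NormedAddCommGroup E] [NormedSpace ℝ E] {a b x : ℝ}

theorem hasDerivAt_derivWithin_Icc {f : ℝ → E} (hf : DifferentiableOn ℝ f (Icc a b))
    (hx : x ∈ Ioo a b) : HasDerivAt f (derivWithin f (Icc a b) x) x :=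
  (hf x (Ioo_subset_Icc_self hx)).hasDerivWithinAt.hasDerivAt (Icc_mem_nhds hx.1 hx.2)

variable {p P : ℝ → ℝ} {v w : ℝ → E}

theorem eq_left_of_hasDerivAt_zero (hv : ContinuousOn v (Icc a b))
    (hv' : ∀ y ∈ Ioo a b, HasDerivAt v 0 y) (hx : x ∈ Icc a b) : v x = v a := by
  rcases (hx.1.trans hx.2).eq_or_lt with rfl | hab
  · rw [le_antisymm hx.2 hx.1]
  obtain ⟨c, hc⟩ := isOpen_Ioo.exists_is_const_of_deriv_eq_zero isPreconnected_Ioo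
    (fun y hy => (hv' y hy).differentiableAt.differentiableWithinAt) fun y hy => (hv' y hy).deriv
  have hIcc : EqOn v (fun _ => c) (Icc a b) :=
    EqOn.of_subset_closure hc hv continuousOn_const Ioo_subset_Icc_self (closure_Ioo hab.ne).ge
  rw [hIcc hx, hIcc (left_mem_Icc.mpr hab.le)]

theorem eq_exp_smul_of_hasDerivAt_neg_smul (hP : ContinuousOn P (Icc a b))
    (hP' : ∀ y ∈ Ioo a b, HasDerivAt P (p y) y) (hv : ContinuousOn v (Icc a b))
    (hv' : ∀ y ∈ Ioo a b, HasDerivAt v (-(p y • v y)) y) (hx : x ∈ Icc a b) :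
    v x = Real.exp (P a - P x) • v a := by
  have hderiv : ∀ y ∈ Ioo a b, HasDerivAt (fun y => Real.exp (P y) • v y) 0 y := fun y hy =>
    ((hP' y hy).exp.fun_smul (hv' y hy)).congr_deriv (by module)
  have hconst : Real.exp (P x) • v x = Real.exp (P a) • v a :=
    eq_left_of_hasDerivAt_zero (hP.rexp.smul hv) hderiv hx
  rw [sub_eq_neg_add, Real.exp_add, mul_smul, ← hconst, smul_smul, ← Real.exp_add,
    neg_add_cancel, Real.exp_zero, one_smul]

theorem eq_sub_integral_exp_smul_of_hasDerivAt [CompleteSpace E]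
    (hP : ContinuousOn P (Icc a b)) (hP' : ∀ y ∈ Ioo a b, HasDerivAt P (p y) y)
    (hv : ContinuousOn v (Icc a b)) (hv' : ∀ y ∈ Ioo a b, HasDerivAt v (-(p y • v y)) y)
    (hw : ContinuousOn w (Icc a b)) (hw' : ∀ y ∈ Ioo a b, HasDerivAt w (v y) y)
    (hx : x ∈ Icc a b) :
    w x = w b - (∫ s in x..b, Real.exp (P a - P s)) • v a := by
  have hsub : Icc x b ⊆ Icc a b := Icc_subset_Icc_left hx.1
  have hftc : ∫ s in x..b, v s = w b - w x :=
    intervalIntegral.integral_eq_sub_of_hasDerivAt_of_le hx.2 (hw.mono hsub)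
      (fun y hy => hw' y ⟨hx.1.trans_lt hy.1, hy.2⟩)
      ((hv.mono hsub).intervalIntegrable_of_Icc hx.2)
  have hexp : ∫ s in x..b, v s = (∫ s in x..b, Real.exp (P a - P s)) • v a := by
    rw [← intervalIntegral.integral_smul_const]
    refine intervalIntegral.integral_congr fun s hs => ?_
    rw [uIcc_of_le hx.2] at hs
    exact eq_exp_smul_of_hasDerivAt_neg_smul hP hP' hv hv' (hsub hs)
  rw [← hexp, hftc, sub_sub_cancel]

end DampedEquation

theorem strictMono_mul_exp_mul_sq {c : ℝ} (hc : 0 ≤ c) :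
    StrictMono fun x : ℝ => x * Real.exp (c * x ^ 2) := by
  refine strictMono_of_hasDerivAt_pos
    (f' := fun x => (1 + 2 * c * x ^ 2) * Real.exp (c * x ^ 2)) (fun x => ?_)
    fun x => by positivity
  exact ((hasDerivAt_id x).mul ((hasDerivAt_pow 2 x).const_mul c).exp).congr_deriv
    (by simp only [id]; push_cast; ring)

/-- Let `h > 0`. If `(W, ω')` with `ω' > 0` and `W ∈ C²([0, ω'])` solves the
stationary problem (ODE-P), then `ω'` is the unique positive root of
`h = (x/2) * exp (x^2/4)` and `W η = h * ∫ s in η..ω', exp (-s^2/4)` on `[0, ω']`. -/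
theorem stationary_solution_unique
    (h ω' : ℝ) (hh : 0 < h) (hω' : 0 < ω') (W : ℝ → ℝ)
    (hreg : ContDiffOn ℝ 2 W (Set.Icc 0 ω'))
    (hode : ∀ η ∈ Set.Ioo 0 ω',
      derivWithin (derivWithin W (Set.Icc 0 ω')) (Set.Icc 0 ω') η
        + η / 2 * derivWithin W (Set.Icc 0 ω') η = 0)
    (hbc0 : -derivWithin W (Set.Icc 0 ω') 0 = h)
    (hbcω : W ω' = 0)
    (hfb : ω' / 2 = -derivWithin W (Set.Icc 0 ω') ω') :
    (h = ω' / 2 * Real.exp (ω' ^ 2 / 4)) ∧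
    (∀ ω : ℝ, 0 < ω → h = ω / 2 * Real.exp (ω ^ 2 / 4) → ω = ω') ∧
    (∀ η ∈ Set.Icc 0 ω', W η = h * ∫ s in η..ω', Real.exp (-s ^ 2 / 4)) := by
  have hW : DifferentiableOn ℝ W (Icc 0 ω') := hreg.differentiableOn two_ne_zero
  have hV : DifferentiableOn ℝ (derivWithin W (Icc 0 ω')) (Icc 0 ω') :=
    (hreg.derivWithin (m := 1) (uniqueDiffOn_Icc hω') (by norm_num)).differentiableOn one_ne_zero
  have hP : ContinuousOn (fun η : ℝ => η ^ 2 / 4) (Icc 0 ω') := by fun_prop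
  have hP' : ∀ η ∈ Ioo 0 ω', HasDerivAt (fun η : ℝ => η ^ 2 / 4) (η / 2) η := fun η _ =>
    ((hasDerivAt_pow 2 η).div_const 4).congr_deriv (by ring)
  have hV' : ∀ η ∈ Ioo 0 ω', HasDerivAt (derivWithin W (Icc 0 ω'))
      (-((η / 2) • derivWithin W (Icc 0 ω') η)) η := fun η hη =>
    (hasDerivAt_derivWithin_Icc hV hη).congr_deriv (eq_neg_of_add_eq_zero_left (hode η hη))
  have hroot : h = ω' / 2 * Real.exp (ω' ^ 2 / 4) := by
    rw [hfb, eq_exp_smul_of_hasDerivAt_neg_smul hP hP' hV.continuousOn hV'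
      (right_mem_Icc.mpr hω'.le), smul_eq_mul, ← mul_neg, hbc0, mul_right_comm, ← Real.exp_add]
    simp
  refine ⟨hroot, fun ω _ hω => ?_, fun η hη => ?_⟩
  · refine (strictMono_mul_exp_mul_sq (c := 1 / 4) (by norm_num)).injective ?_
    simp only [one_div_mul_eq_div]
    linarith
  · rw [eq_sub_integral_exp_smul_of_hasDerivAt hP hP' hV.continuousOn hV' hW.continuousOn
      (fun y hy => hasDerivAt_derivWithin_Icc hW hy) hη, hbcω, neg_eq_iff_eq_neg.mp hbc0]
    simp [neg_div, mul_comm]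
end

section
/- Let h > 0, b_0 > 0, and let u_0 ∈ W^{1,∞}(0,∞) satisfy u_0 ≥ 0, u_0(0) > 0, and u_0 = 0 on [b_0, ∞). Let (u, s) be the classical solution of the one-phase Stefan problem (NSP), let ω > 0 be the unique positive root of h = (x/2)·e^{x²/4}, and let U(η) = h·∫_η^ω e^{−s²/4} ds. Then: (1) s(t)/√(t+1) → ω as t → ∞; and (2) sup over x with x/√(t+1) ∈ [0, ω] of |u(x,t) − U(x/√(t+1))| → 0 as t → ∞, where u is extended by zero for x > s(t). -/
/-- `(u, s)` is a classical solution of the one-phase Stefan problem (NSP). -/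
def IsClassicalSolNSP (h b0 : ℝ) (u0 : ℝ → ℝ) (u : ℝ → ℝ → ℝ) (s : ℝ → ℝ) : Prop :=
  ContDiffOn ℝ 1 s (Set.Ici 0) ∧ s 0 = b0 ∧
  ContinuousOn (fun p : ℝ × ℝ => u p.1 p.2)
    {p : ℝ × ℝ | 0 ≤ p.2 ∧ 0 ≤ p.1 ∧ p.1 ≤ s p.2} ∧
  ContinuousOn (fun p : ℝ × ℝ => deriv (fun y => u y p.2) p.1)
    {p : ℝ × ℝ | 0 < p.2 ∧ 0 ≤ p.1 ∧ p.1 ≤ s p.2} ∧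
  ContinuousOn (fun p : ℝ × ℝ => deriv (deriv (fun y => u y p.2)) p.1)
    {p : ℝ × ℝ | 0 < p.2 ∧ 0 < p.1 ∧ p.1 < s p.2} ∧
  ContinuousOn (fun p : ℝ × ℝ => deriv (fun t => u p.1 t) p.2)
    {p : ℝ × ℝ | 0 < p.2 ∧ 0 < p.1 ∧ p.1 < s p.2} ∧
  (∀ t > (0:ℝ), ∀ x, 0 < x → x < s t →
    DifferentiableAt ℝ (fun τ => u x τ) t ∧
    DifferentiableAt ℝ (fun y => u y t) x ∧
    DifferentiableAt ℝ (deriv (fun y => u y t)) x ∧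
    deriv (fun τ => u x τ) t = deriv (deriv (fun y => u y t)) x) ∧
  (∀ t > (0:ℝ), -deriv (fun y => u y t) 0 = h / Real.sqrt (t + 1)) ∧
  (∀ t > (0:ℝ), u (s t) t = 0) ∧
  (∀ t > (0:ℝ), deriv s t = -deriv (fun y => u y t) (s t)) ∧
  (∀ x, 0 < x → x < b0 → u x 0 = u0 x)

/-!
In the variable `η = x / √(t + 1)` the pair `(U, ω)` is a stationary state of (NSP). With
`P(y) = h ∫₀ʸ exp(-σ² / 4) dσ + κ y² / 2` and a curve `σ(t)` relaxing slowly to a limit `A`, the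
functions `P(σ(t)) - P(η)` with free boundary `σ(t) √(t + 1)` are strict supersolutions if `κ > 0`
and `A` is slightly above `ω`, and strict subsolutions if `κ < 0` and `A` is slightly below `ω`.
Starting `σ` at a large, respectively small, value puts such a barrier above, respectively below,
the solution at time `1`, where the incoming flux has already made `u(0, 1)` positive. The
comparison principle keeps it there for all later times, and letting `t → ∞`, then `κ → 0` and
`A → ω`, squeezes `(u, s)` onto `(U, ω)`.
-/

open Set Filter Topology

/-! ### One-sided derivative tests -/

section FirstOrderConditions

variable {f f' : ℝ → ℝ} {a d t₀ : ℝ}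

theorem deriv_nonneg_of_isLocalMinOn_Ici (hmin : IsLocalMinOn f (Ici a) a)
    (hf : HasDerivWithinAt f d (Ici a) a) : 0 ≤ d := by
  have hone : (1 : ℝ) ∈ posTangentConeAt (Ici a) a :=
    mem_posTangentConeAt_of_segment_subset
      ((convex_Ici a).segment_subset self_mem_Ici (by simp))
  simpa using hmin.hasFDerivWithinAt_nonneg hf.hasFDerivWithinAt hone

theorem deriv_nonpos_of_isLocalMinOn_Iic (hmin : IsLocalMinOn f (Iic a) a)
    (hf : HasDerivWithinAt f d (Iic a) a) : d ≤ 0 := by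
  have hone : (-1 : ℝ) ∈ posTangentConeAt (Iic a) a :=
    mem_posTangentConeAt_of_segment_subset
      ((convex_Iic a).segment_subset self_mem_Iic (by simp))
  simpa using hmin.hasFDerivWithinAt_nonneg hf.hasFDerivWithinAt hone

theorem second_deriv_nonneg_of_isLocalMin (hmin : IsLocalMin f a)
    (hf : ∀ᶠ y in 𝓝 a, HasDerivAt f (f' y) y) (hf' : HasDerivAt f' d a) : 0 ≤ d := by
  by_contra! hd
  have hderiv : deriv f =ᶠ[𝓝 a] f' := hf.mono fun y hy => hy.deriv
  have hderiv₂ : deriv (deriv f) a = d := hderiv.deriv_eq.trans hf'.deriv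
  have hmax : IsLocalMax f a := isLocalMax_of_deriv_deriv_neg (hderiv₂ ▸ hd)
    hmin.deriv_eq_zero hf.self_of_nhds.continuousAt
  have hconst : f =ᶠ[𝓝 a] fun _ => f a := by
    filter_upwards [hmin, hmax] with y h₁ h₂ using le_antisymm h₂ h₁
  have hderiv₂_zero : deriv (deriv f) a = 0 := by
    simpa using hconst.deriv.deriv_eq
  exact hd.ne (hderiv₂.symm.trans hderiv₂_zero)

theorem pos_of_deriv_pos_at_first_zero (hf : ContinuousOn f (Ici t₀)) (h₀ : 0 < f t₀)
    (hzero : ∀ t₁ > t₀, (∀ t ∈ Ico t₀ t₁, 0 < f t) → f t₁ = 0 → ∃ d > 0, HasDerivAt f d t₁) :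
    ∀ t ≥ t₀, 0 < f t := by
  by_contra! hneg
  have hclosed : IsClosed {t ∈ Ici t₀ | f t ≤ 0} := isClosed_Ici.isClosed_le hf continuousOn_const
  have hbdd : BddBelow {t ∈ Ici t₀ | f t ≤ 0} := ⟨t₀, fun t ht => ht.1⟩
  obtain ⟨hge, hle⟩ := hclosed.csInf_mem hneg hbdd
  set t₁ := sInf {t ∈ Ici t₀ | f t ≤ 0}
  have hlt : t₀ < t₁ := lt_of_le_of_ne hge fun heq => (heq ▸ hle).not_gt h₀
  have hpos : ∀ t ∈ Ico t₀ t₁, 0 < f t := fun t ht =>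
    not_le.1 fun hft => ht.2.not_ge (csInf_le hbdd ⟨ht.1, hft⟩)
  have hfirst : f t₁ = 0 := by
    have hmem : t₁ ∈ closure (Ico t₀ t₁) := closure_Ico hlt.ne ▸ right_mem_Icc.2 hge
    have hcl : f t₁ ∈ closure (Ici 0) :=
      ((hf t₁ hge).mono Ico_subset_Ici_self).mem_closure hmem fun t ht => (hpos t ht).le
    exact hle.antisymm (isClosed_Ici.closure_subset hcl)
  obtain ⟨d, hd, hderiv⟩ := hzero t₁ hlt hpos hfirst
  refine hd.not_ge (deriv_nonpos_of_isLocalMinOn_Iic ?_ hderiv.hasDerivWithinAt)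
  filter_upwards [Ioc_mem_nhdsLE hlt] with t ht
  rcases ht.2.eq_or_lt with rfl | htlt
  · exact le_rfl
  · exact hfirst.le.trans (hpos t ⟨ht.1.le, htlt⟩).le

end FirstOrderConditions

/-! ### Minimum principle for the heat operator below a moving boundary -/

/-- The space-time region lying over the times in `J` and between `x = 0` and the moving boundary
`x = r t`, in the coordinates `(x, t)`. Fibres over times with `r t < 0` are empty. -/
def regionUnder (r : ℝ → ℝ) (J : Set ℝ) : Set (ℝ × ℝ) :=
  {p | p.2 ∈ J ∧ p.1 ∈ Icc 0 (r p.2)}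

theorem isCompact_regionUnder {r : ℝ → ℝ} {J : Set ℝ} (hJ : IsCompact J)
    (hr : ContinuousOn r J) : IsCompact (regionUnder r J) := by
  obtain ⟨M, hM⟩ := hJ.bddAbove_image hr
  have hbox : IsCompact (Icc 0 M ×ˢ J) := isCompact_Icc.prod hJ
  have hrsnd : ContinuousOn (fun p : ℝ × ℝ => r p.2) (Icc 0 M ×ˢ J) :=
    hr.comp continuousOn_snd fun p hp => hp.2
  have hregion : regionUnder r J = {p ∈ Icc 0 M ×ˢ J | p.1 ≤ r p.2} := by
    ext p
    exact ⟨fun hp => ⟨⟨⟨hp.2.1, hp.2.2.trans (hM (mem_image_of_mem r hp.1))⟩, hp.1⟩, hp.2.2⟩,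
      fun hp => ⟨hp.1.2, hp.1.1.1, hp.2⟩⟩
  rw [hregion]
  exact hbox.of_isClosed_subset (hbox.isClosed.isClosed_le continuousOn_fst hrsnd) (sep_subset _ _)

/-- The heat operator residual: `v` has the derivatives `v_t`, `v_x` (near `x`) and `v_xx` at
`(x, t)`, and `v_t - v_xx = c` there. The derivatives are existentially quantified so that no
junk value of `deriv` can enter. -/
def HasHeatResidual (v : ℝ → ℝ → ℝ) (c x t : ℝ) : Prop :=
  ∃ (vx : ℝ → ℝ) (vxx vt : ℝ), (∀ᶠ y in 𝓝 x, HasDerivAt (v · t) (vx y) y) ∧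
    HasDerivAt vx vxx x ∧ HasDerivAt (v x) vt t ∧ vt - vxx = c

namespace HasHeatResidual

variable {v w : ℝ → ℝ → ℝ} {c d x t : ℝ}

theorem add (hv : HasHeatResidual v c x t) (hw : HasHeatResidual w d x t) :
    HasHeatResidual (fun y τ => v y τ + w y τ) (c + d) x t := by
  obtain ⟨vx, vxx, vt, hvx, hvxx, hvt, rfl⟩ := hv
  obtain ⟨wx, wxx, wt, hwx, hwxx, hwt, rfl⟩ := hw
  exact ⟨_, _, _, by filter_upwards [hvx, hwx] with y using HasDerivAt.add,
    hvxx.add hwxx, hvt.add hwt, by ring⟩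

theorem neg (hv : HasHeatResidual v c x t) : HasHeatResidual (fun y τ => -v y τ) (-c) x t := by
  obtain ⟨vx, vxx, vt, hvx, hvxx, hvt, rfl⟩ := hv
  exact ⟨_, _, _, hvx.mono fun y => HasDerivAt.neg, hvxx.neg, hvt.neg, by ring⟩

theorem sub (hv : HasHeatResidual v c x t) (hw : HasHeatResidual w d x t) :
    HasHeatResidual (fun y τ => v y τ - w y τ) (c - d) x t := by
  simpa only [sub_eq_add_neg] using hv.add hw.neg

end HasHeatResidual

theorem hasHeatResidual_affine (a b c x t : ℝ) :
    HasHeatResidual (fun y τ => a * y + b * τ + c) b x t :=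
  ⟨fun _ => a, 0, b, .of_forall fun y => by
      simpa using (((hasDerivAt_id y).const_mul a).add_const (b * t)).add_const c,
    hasDerivAt_const x a, by
      simpa using (((hasDerivAt_id t).const_mul b).const_add (a * x)).add_const c, sub_zero b⟩

section MinimumPrinciple

variable {t₀ T : ℝ} {r : ℝ → ℝ} {w : ℝ → ℝ → ℝ}

theorem not_isMinOn_regionUnder_of_heatResidual_pos {x t c : ℝ}
    (hr : ContinuousOn r (Icc t₀ T)) (ht : t ∈ Ioc t₀ T) (hx : x ∈ Ioo 0 (r t))
    (hc : 0 < c) (hres : HasHeatResidual w c x t) :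
    ¬ IsMinOn (Function.uncurry w) (regionUnder r (Icc t₀ T)) (x, t) := by
  intro hmin
  obtain ⟨wx, wxx, wt, hwx, hwxx, hwt, rfl⟩ := hres
  have hspace : IsLocalMin (w · t) x := by
    filter_upwards [Ioo_mem_nhds hx.1 hx.2] with y hy
    exact hmin (a := (y, t)) ⟨Ioc_subset_Icc_self ht, Ioo_subset_Icc_self hy⟩
  have htime : IsLocalMinOn (w x) (Iic t) t := by
    have hleft : ∀ᶠ τ in 𝓝[≤] t, τ ∈ Icc t₀ T := by
      filter_upwards [Ioc_mem_nhdsLE ht.1] with τ hτ using ⟨hτ.1.le, hτ.2.trans ht.2⟩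
    have hinside : ∀ᶠ τ in 𝓝[≤] t, x < r τ :=
      ((hr t (Ioc_subset_Icc_self ht)).mono_of_mem_nhdsWithin hleft).eventually
        (lt_mem_nhds hx.2)
    filter_upwards [hleft, hinside] with τ hτ hxτ
    exact hmin (a := (x, τ)) ⟨hτ, hx.1.le, hxτ.le⟩
  have hwxx_nonneg := second_deriv_nonneg_of_isLocalMin hspace hwx hwxx
  have hwt_nonpos := deriv_nonpos_of_isLocalMinOn_Iic htime hwt.hasDerivWithinAt
  linarith

theorem heat_min_principle_of_pos (hr : ContinuousOn r (Icc t₀ T))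
    (hw : ContinuousOn (Function.uncurry w) (regionUnder r (Icc t₀ T)))
    (hinit : ∀ x ∈ Icc 0 (r t₀), 0 ≤ w x t₀) (hlat : ∀ t ∈ Ioc t₀ T, 0 ≤ w (r t) t)
    (hflux : ∀ t ∈ Ioc t₀ T, ∃ d < 0, HasDerivWithinAt (w · t) d (Ici 0) 0)
    (hheat : ∀ t ∈ Ioc t₀ T, ∀ x ∈ Ioo 0 (r t), ∃ c > 0, HasHeatResidual w c x t) :
    ∀ t ∈ Icc t₀ T, ∀ x ∈ Icc 0 (r t), 0 ≤ w x t := by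
  intro t₁ ht₁ x₁ hx₁
  have hmem : (x₁, t₁) ∈ regionUnder r (Icc t₀ T) := ⟨ht₁, hx₁⟩
  obtain ⟨⟨x, t⟩, ⟨ht, hx⟩, hmin⟩ :=
    (isCompact_regionUnder isCompact_Icc hr).exists_isMinOn ⟨_, hmem⟩ hw
  change t ∈ Icc t₀ T at ht
  change x ∈ Icc 0 (r t) at hx
  suffices hnonneg : 0 ≤ w x t from hnonneg.trans (hmin hmem)
  rcases ht.1.eq_or_lt with rfl | ht₀
  · exact hinit x hx
  have htIoc : t ∈ Ioc t₀ T := ⟨ht₀, ht.2⟩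
  rcases hx.2.eq_or_lt with rfl | hxr
  · exact hlat t htIoc
  rcases hx.1.eq_or_lt with rfl | hx₀
  · obtain ⟨d, hd, hderiv⟩ := hflux t htIoc
    refine absurd (deriv_nonneg_of_isLocalMinOn_Ici ?_ hderiv) hd.not_ge
    filter_upwards [Ico_mem_nhdsGE hxr] with y hy
    exact hmin (a := (y, t)) ⟨ht, Ico_subset_Icc_self hy⟩
  · obtain ⟨c, hc, hres⟩ := hheat t htIoc x ⟨hx₀, hxr⟩
    exact absurd hmin (not_isMinOn_regionUnder_of_heatResidual_pos hr htIoc ⟨hx₀, hxr⟩ hc hres)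

-- `(M - x) + (t - t₀)` is nonnegative on the region and makes both inequalities strict.
theorem heat_min_principle_perturbed {M ε : ℝ} (hε : 0 < ε) (hM : ∀ t ∈ Icc t₀ T, r t ≤ M)
    (hr : ContinuousOn r (Icc t₀ T))
    (hw : ContinuousOn (Function.uncurry w) (regionUnder r (Icc t₀ T)))
    (hinit : ∀ x ∈ Icc 0 (r t₀), 0 ≤ w x t₀) (hlat : ∀ t ∈ Ioc t₀ T, 0 ≤ w (r t) t)
    (hflux : ∀ t ∈ Ioc t₀ T, ∃ d ≤ 0, HasDerivWithinAt (w · t) d (Ici 0) 0)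
    (hheat : ∀ t ∈ Ioc t₀ T, ∀ x ∈ Ioo 0 (r t), ∃ c ≥ 0, HasHeatResidual w c x t) :
    ∀ t ∈ Icc t₀ T, ∀ x ∈ Icc 0 (r t), 0 ≤ w x t + (-ε * x + ε * t + ε * (M - t₀)) := by
  have hcorr : ∀ t ∈ Icc t₀ T, ∀ x ≤ r t, 0 ≤ -ε * x + ε * t + ε * (M - t₀) := by
    intro t ht x hx
    have : 0 ≤ ε * ((M - x) + (t - t₀)) := mul_nonneg hε.le (by linarith [hM t ht, ht.1])
    linarith
  intro t₁ ht₁ x₁ hx₁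
  refine heat_min_principle_of_pos (w := fun x t => w x t + (-ε * x + ε * t + ε * (M - t₀)))
    hr (hw.add (by fun_prop)) ?_ ?_ ?_ ?_ t₁ ht₁ x₁ hx₁
  · intro x hx
    exact add_nonneg (hinit x hx) (hcorr t₀ (left_mem_Icc.2 (ht₁.1.trans ht₁.2)) x hx.2)
  · intro t ht
    exact add_nonneg (hlat t ht) (hcorr t (Ioc_subset_Icc_self ht) _ le_rfl)
  · intro t ht
    obtain ⟨d, hd, hderiv⟩ := hflux t ht
    refine ⟨d + -ε, by linarith, hderiv.add (HasDerivAt.hasDerivWithinAt ?_)⟩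
    simpa using (((hasDerivAt_id (0 : ℝ)).const_mul (-ε)).add_const (ε * t)).add_const
      (ε * (M - t₀))
  · intro t ht x hx
    obtain ⟨c, hc, hres⟩ := hheat t ht x hx
    exact ⟨c + ε, by linarith, hres.add (hasHeatResidual_affine _ _ _ x t)⟩

theorem heat_min_principle (hr : ContinuousOn r (Icc t₀ T))
    (hw : ContinuousOn (Function.uncurry w) (regionUnder r (Icc t₀ T)))
    (hinit : ∀ x ∈ Icc 0 (r t₀), 0 ≤ w x t₀) (hlat : ∀ t ∈ Ioc t₀ T, 0 ≤ w (r t) t)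
    (hflux : ∀ t ∈ Ioc t₀ T, ∃ d ≤ 0, HasDerivWithinAt (w · t) d (Ici 0) 0)
    (hheat : ∀ t ∈ Ioc t₀ T, ∀ x ∈ Ioo 0 (r t), ∃ c ≥ 0, HasHeatResidual w c x t) :
    ∀ t ∈ Icc t₀ T, ∀ x ∈ Icc 0 (r t), 0 ≤ w x t := by
  intro t ht x hx
  obtain ⟨M, hM⟩ := isCompact_Icc.bddAbove_image hr
  have hlim : Tendsto (fun ε : ℝ => w x t + (-ε * x + ε * t + ε * (M - t₀))) (𝓝[>] 0)
      (𝓝 (w x t)) := by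
    have hcont : Continuous fun ε : ℝ => w x t + (-ε * x + ε * t + ε * (M - t₀)) := by fun_prop
    simpa using (hcont.tendsto 0).mono_left nhdsWithin_le_nhds
  exact ge_of_tendsto hlim (eventually_mem_nhdsWithin.mono fun ε hε =>
    heat_min_principle_perturbed hε (fun τ hτ => hM (mem_image_of_mem r hτ)) hr hw hinit hlat
      hflux hheat t ht x hx)

end MinimumPrinciple

/-! ### Comparison for the Stefan problem -/

/-- A classical solution, from time `t₀` on, of the one-phase Stefan problem with heat source `f`,
incoming flux `g` at `x = 0` and extra boundary velocity `q`:
`v_t - v_xx = f`, `-v_x(0, t) = g`, `v(r(t), t) = 0`, `r' = -v_x(r(t), t) + q`.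
Solutions of (NSP) have `f = q = 0`; for barriers the signs of `f`, `g - h / √(t + 1)` and `q`
say on which side of a solution they stay. -/
structure IsForcedStefanSolution (t₀ : ℝ) (f : ℝ → ℝ → ℝ) (g q : ℝ → ℝ) (v : ℝ → ℝ → ℝ)
    (r : ℝ → ℝ) : Prop where
  boundary_continuousOn : ContinuousOn r (Ici t₀)
  boundary_pos : ∀ t ≥ t₀, 0 < r t
  continuousOn : ContinuousOn (Function.uncurry v) (regionUnder r (Ici t₀))
  heat : ∀ t > t₀, ∀ x ∈ Ioo 0 (r t), HasHeatResidual v (f x t) x t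
  flux : ∀ t > t₀, HasDerivWithinAt (v · t) (-g t) (Ici 0) 0
  boundary_eq_zero : ∀ t > t₀, v (r t) t = 0
  stefan : ∀ t > t₀, ∃ d, HasDerivWithinAt (v · t) d (Iic (r t)) (r t) ∧ HasDerivAt r (q t - d) t

namespace IsForcedStefanSolution

variable {t₀ T : ℝ} {f₁ f₂ : ℝ → ℝ → ℝ} {g₁ g₂ q₁ q₂ r₁ r₂ : ℝ → ℝ} {v₁ v₂ : ℝ → ℝ → ℝ}

theorem mono {t₁ : ℝ} (hsol : IsForcedStefanSolution t₀ f₁ g₁ q₁ v₁ r₁) (h₀₁ : t₀ ≤ t₁) :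
    IsForcedStefanSolution t₁ f₁ g₁ q₁ v₁ r₁ where
  boundary_continuousOn := hsol.boundary_continuousOn.mono (Ici_subset_Ici.2 h₀₁)
  boundary_pos t ht := hsol.boundary_pos t (h₀₁.trans ht)
  continuousOn := hsol.continuousOn.mono fun _ hp => ⟨h₀₁.trans hp.1, hp.2⟩
  heat t ht := hsol.heat t (h₀₁.trans_lt ht)
  flux t ht := hsol.flux t (h₀₁.trans_lt ht)
  boundary_eq_zero t ht := hsol.boundary_eq_zero t (h₀₁.trans_lt ht)
  stefan t ht := hsol.stefan t (h₀₁.trans_lt ht)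

theorem continuousOn_slice (hsol : IsForcedStefanSolution t₀ f₁ g₁ q₁ v₁ r₁) {t : ℝ}
    (ht : t₀ ≤ t) : ContinuousOn (v₁ · t) (Icc 0 (r₁ t)) :=
  hsol.continuousOn.comp (f := fun x : ℝ => (x, t)) (by fun_prop) fun _ hx => ⟨ht, hx⟩

theorem le_of_boundary_le (h₁ : IsForcedStefanSolution t₀ f₁ g₁ q₁ v₁ r₁)
    (h₂ : IsForcedStefanSolution t₀ f₂ g₂ q₂ v₂ r₂)
    (hf : ∀ t > t₀, ∀ x ∈ Ioo 0 (r₁ t), f₁ x t ≤ f₂ x t) (hg : ∀ t > t₀, g₁ t ≤ g₂ t)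
    (hv₂ : ∀ t > t₀, ∀ x ∈ Icc 0 (r₂ t), 0 ≤ v₂ x t)
    (hinit : ∀ x ∈ Icc 0 (r₁ t₀), v₁ x t₀ ≤ v₂ x t₀)
    (hr : ∀ t ∈ Icc t₀ T, r₁ t ≤ r₂ t) :
    ∀ t ∈ Icc t₀ T, ∀ x ∈ Icc 0 (r₁ t), v₁ x t ≤ v₂ x t := by
  suffices hdiff : ∀ t ∈ Icc t₀ T, ∀ x ∈ Icc 0 (r₁ t), 0 ≤ v₂ x t - v₁ x t from
    fun t ht x hx => sub_nonneg.1 (hdiff t ht x hx)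
  refine heat_min_principle (h₁.boundary_continuousOn.mono Icc_subset_Ici_self) ?_
    (fun x hx => sub_nonneg.2 (hinit x hx)) ?_ ?_ ?_
  · exact (h₂.continuousOn.mono fun p hp => ⟨hp.1.1, hp.2.1, hp.2.2.trans (hr _ hp.1)⟩).sub
      (h₁.continuousOn.mono fun p hp => ⟨hp.1.1, hp.2⟩)
  · intro t ht
    rw [h₁.boundary_eq_zero t ht.1, sub_zero]
    exact hv₂ t ht.1 _ ⟨(h₁.boundary_pos t ht.1.le).le, hr t (Ioc_subset_Icc_self ht)⟩
  · intro t ht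
    exact ⟨-g₂ t - -g₁ t, by linarith [hg t ht.1], (h₂.flux t ht.1).sub (h₁.flux t ht.1)⟩
  · intro t ht x hx
    have hx₂ : x ∈ Ioo 0 (r₂ t) := ⟨hx.1, hx.2.trans_le (hr t (Ioc_subset_Icc_self ht))⟩
    exact ⟨_, sub_nonneg.2 (hf t ht.1 x hx), (h₂.heat t ht.1 x hx₂).sub (h₁.heat t ht.1 x hx)⟩

-- If the boundaries met, `v₂ - v₁` would vanish at the meeting point and be nonnegative to its
-- left, so the Stefan conditions would separate the boundaries at a positive speed.
theorem boundary_lt (h₁ : IsForcedStefanSolution t₀ f₁ g₁ q₁ v₁ r₁)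
    (h₂ : IsForcedStefanSolution t₀ f₂ g₂ q₂ v₂ r₂)
    (hf : ∀ t > t₀, ∀ x ∈ Ioo 0 (r₁ t), f₁ x t ≤ f₂ x t) (hg : ∀ t > t₀, g₁ t ≤ g₂ t)
    (hq : ∀ t > t₀, q₁ t < q₂ t) (hv₂ : ∀ t > t₀, ∀ x ∈ Icc 0 (r₂ t), 0 ≤ v₂ x t)
    (hinit : ∀ x ∈ Icc 0 (r₁ t₀), v₁ x t₀ ≤ v₂ x t₀) (hr₀ : r₁ t₀ < r₂ t₀) :
    ∀ t ≥ t₀, r₁ t < r₂ t := by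
  suffices hdiff : ∀ t ≥ t₀, 0 < r₂ t - r₁ t from fun t ht => sub_pos.1 (hdiff t ht)
  refine pos_of_deriv_pos_at_first_zero (h₂.boundary_continuousOn.sub h₁.boundary_continuousOn)
    (sub_pos.2 hr₀) fun t₁ ht₁ hpos hmeet => ?_
  obtain ⟨d₁, hd₁, hr₁⟩ := h₁.stefan t₁ ht₁
  obtain ⟨d₂, hd₂, hr₂⟩ := h₂.stefan t₁ ht₁
  replace hmeet : r₂ t₁ = r₁ t₁ := sub_eq_zero.1 hmeet
  have hle : ∀ t ∈ Icc t₀ t₁, r₁ t ≤ r₂ t := fun t ht => by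
    rcases ht.2.eq_or_lt with rfl | hlt
    · exact hmeet.ge
    · exact (sub_pos.1 (hpos t ⟨ht.1, hlt⟩)).le
  have hslope : d₂ - d₁ ≤ 0 := by
    rw [hmeet] at hd₂
    refine deriv_nonpos_of_isLocalMinOn_Iic ?_ (hd₂.sub hd₁)
    filter_upwards [Ioc_mem_nhdsLE (h₁.boundary_pos t₁ ht₁.le)] with x hx
    have hzero₂ := h₂.boundary_eq_zero t₁ ht₁
    rw [hmeet] at hzero₂
    simpa [h₁.boundary_eq_zero t₁ ht₁, hzero₂] using
      h₁.le_of_boundary_le h₂ hf hg hv₂ hinit hle t₁ (right_mem_Icc.2 ht₁.le) x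
        (Ioc_subset_Icc_self hx)
  exact ⟨_, by linarith [hq t₁ ht₁], hr₂.sub hr₁⟩

theorem comparison (h₁ : IsForcedStefanSolution t₀ f₁ g₁ q₁ v₁ r₁)
    (h₂ : IsForcedStefanSolution t₀ f₂ g₂ q₂ v₂ r₂)
    (hf : ∀ t > t₀, ∀ x ∈ Ioo 0 (r₁ t), f₁ x t ≤ f₂ x t) (hg : ∀ t > t₀, g₁ t ≤ g₂ t)
    (hq : ∀ t > t₀, q₁ t < q₂ t) (hv₂ : ∀ t > t₀, ∀ x ∈ Icc 0 (r₂ t), 0 ≤ v₂ x t)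
    (hinit : ∀ x ∈ Icc 0 (r₁ t₀), v₁ x t₀ ≤ v₂ x t₀) (hr₀ : r₁ t₀ < r₂ t₀) :
    ∀ t ≥ t₀, r₁ t < r₂ t ∧ ∀ x ∈ Icc 0 (r₁ t), v₁ x t ≤ v₂ x t := by
  have hr := h₁.boundary_lt h₂ hf hg hq hv₂ hinit hr₀
  exact fun t ht => ⟨hr t ht, h₁.le_of_boundary_le h₂ hf hg hv₂ hinit
    (fun τ hτ => (hr τ hτ.1).le) t (right_mem_Icc.2 ht)⟩

end IsForcedStefanSolution

/-- A solution of (NSP) from time `t₀` on, whatever its state at that time. -/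
abbrev IsNSPSolutionFrom (t₀ h : ℝ) (u : ℝ → ℝ → ℝ) (s : ℝ → ℝ) : Prop :=
  IsForcedStefanSolution t₀ (fun _ _ => 0) (fun t => h / √(t + 1)) (fun _ => 0) u s

/-! ### Self-similar barriers -/

section SelfSimilar

variable {P p p' σ ρ : ℝ → ℝ} {t t₀ x : ℝ}

theorem hasDerivAt_sqrt_add_one (ht : 0 < t + 1) :
    HasDerivAt (fun τ => √(τ + 1)) (1 / (2 * √(t + 1))) t :=
  ((hasDerivAt_id t).add_const 1).sqrt ht.ne'

theorem hasDerivAt_mul_sqrt_add_one (hσ : HasDerivAt σ (ρ t / (t + 1)) t) (ht : 0 < t + 1) :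
    HasDerivAt (fun τ => σ τ * √(τ + 1)) ((ρ t + σ t / 2) / √(t + 1)) t := by
  refine (hσ.mul (hasDerivAt_sqrt_add_one ht)).congr_deriv ?_
  field_simp
  rw [Real.sq_sqrt ht.le]
  ring

theorem hasDerivAt_const_div_sqrt_add_one (x : ℝ) (ht : 0 < t + 1) :
    HasDerivAt (fun τ => x / √(τ + 1)) (-(x / √(t + 1)) / (2 * (t + 1))) t := by
  refine ((hasDerivAt_const t x).div (hasDerivAt_sqrt_add_one ht)
    (Real.sqrt_pos.2 ht).ne').congr_deriv ?_
  field_simp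
  rw [Real.sq_sqrt ht.le]
  ring

theorem hasDerivAt_comp_div_sqrt {c : ℝ} (hP : HasDerivAt P c (x / √(t + 1))) :
    HasDerivAt (fun y => P (y / √(t + 1))) (c / √(t + 1)) x :=
  (hP.comp x ((hasDerivAt_id x).div_const √(t + 1))).congr_deriv (mul_one_div c _)

-- With `η = x / √(t + 1)`: `v_xx = -p'(η) / (t + 1)` and `∂ₜη = -η / (2 (t + 1))`.
theorem hasHeatResidual_selfSimilar (hP : ∀ y, HasDerivAt P (p y) y)
    (hp : HasDerivAt p (p' (x / √(t + 1))) (x / √(t + 1))) (hσ : HasDerivAt σ (ρ t / (t + 1)) t)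
    (ht : 0 < t + 1) :
    HasHeatResidual (fun x t => P (σ t) - P (x / √(t + 1)))
      ((ρ t * p (σ t) + (p' (x / √(t + 1)) + x / √(t + 1) * p (x / √(t + 1)) / 2)) / (t + 1))
      x t := by
  refine ⟨fun y => -(p (y / √(t + 1)) / √(t + 1)), -(p' (x / √(t + 1)) / √(t + 1) / √(t + 1)),
    _, .of_forall fun y => (hasDerivAt_comp_div_sqrt (hP _)).const_sub _,
    ((hasDerivAt_comp_div_sqrt hp).div_const _).neg,
    ((hP _).comp t hσ).sub ((hP _).comp t (hasDerivAt_const_div_sqrt_add_one x ht)), ?_⟩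
  rw [div_div _ √(t + 1), Real.mul_self_sqrt ht.le]
  field_simp
  ring

theorem isForcedStefanSolution_selfSimilar (ht₀ : 0 < t₀ + 1) (hP : ∀ y, HasDerivAt P (p y) y)
    (hp : ∀ y, HasDerivAt p (p' y) y) (hσ : ∀ t ≥ t₀, HasDerivAt σ (ρ t / (t + 1)) t)
    (hσ_pos : ∀ t ≥ t₀, 0 < σ t) :
    IsForcedStefanSolution t₀
      (fun x t => (ρ t * p (σ t) +
        (p' (x / √(t + 1)) + x / √(t + 1) * p (x / √(t + 1)) / 2)) / (t + 1))
      (fun t => p 0 / √(t + 1))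
      (fun t => (ρ t + σ t / 2 - p (σ t)) / √(t + 1))
      (fun x t => P (σ t) - P (x / √(t + 1))) (fun t => σ t * √(t + 1)) := by
  have ht_pos : ∀ t ≥ t₀, 0 < t + 1 := fun t ht => by linarith
  have hP_cont : Continuous P := continuous_iff_continuousAt.2 fun y => (hP y).continuousAt
  have hσ_cont : ContinuousOn σ (Ici t₀) := fun t ht => (hσ t ht).continuousAt.continuousWithinAt
  have hdiv : ∀ t ≥ t₀, σ t * √(t + 1) / √(t + 1) = σ t := fun t ht =>
    mul_div_cancel_right₀ _ (Real.sqrt_pos.2 (ht_pos t ht)).ne'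
  exact {
    boundary_continuousOn := hσ_cont.mul (by fun_prop)
    boundary_pos := fun t ht => mul_pos (hσ_pos t ht) (Real.sqrt_pos.2 (ht_pos t ht))
    continuousOn := by
      refine (hP_cont.comp_continuousOn (hσ_cont.comp continuousOn_snd fun z hz => hz.1)).sub
        (hP_cont.comp_continuousOn (continuousOn_fst.div (by fun_prop) fun z hz => ?_))
      exact (Real.sqrt_pos.2 (ht_pos _ hz.1)).ne'
    heat := fun t ht x _ =>
      hasHeatResidual_selfSimilar hP (hp _) (hσ t ht.le) (ht_pos t ht.le)
    flux := fun t _ => by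
      have h0 : HasDerivAt P (p 0) (0 / √(t + 1)) := by simpa using hP 0
      exact ((hasDerivAt_comp_div_sqrt h0).const_sub _).hasDerivWithinAt
    boundary_eq_zero := fun t ht => by simp only [hdiv t ht.le, sub_self]
    stefan := fun t ht => by
      have hboundary : HasDerivAt P (p (σ t)) (σ t * √(t + 1) / √(t + 1)) := by
        simpa only [hdiv t ht.le] using hP (σ t)
      exact ⟨-(p (σ t) / √(t + 1)),
        ((hasDerivAt_comp_div_sqrt hboundary).const_sub _).hasDerivWithinAt,
        (hasDerivAt_mul_sqrt_add_one (hσ t ht.le) (ht_pos t ht.le)).congr_deriv (by ring)⟩ }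

end SelfSimilar

/-- The primitive `Φ` of `exp (-y² / 4)` vanishing at `0`. -/
noncomputable def gaussPrimitive (y : ℝ) : ℝ :=
  ∫ σ in 0..y, Real.exp (-σ ^ 2 / 4)

/-- The primitive `h Φ(y) + κ y² / 2` generating the barrier profiles `P(σ) - P(η)`. For `κ = 0`
and `σ = ω` this profile is `U`; the sign of `κ` makes it a strict super- or subsolution. -/
noncomputable def barrierPrimitive (h κ y : ℝ) : ℝ :=
  h * gaussPrimitive y + κ * y ^ 2 / 2

/-- The derivative of `barrierPrimitive h κ`. -/
noncomputable def barrierSlope (h κ y : ℝ) : ℝ :=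
  h * Real.exp (-y ^ 2 / 4) + κ * y

section Profiles

variable {h κ κ' y ω : ℝ}

theorem hasDerivAt_gaussPrimitive (y : ℝ) :
    HasDerivAt gaussPrimitive (Real.exp (-y ^ 2 / 4)) y := by
  have hcont : Continuous fun σ : ℝ => Real.exp (-σ ^ 2 / 4) := by fun_prop
  exact hcont.integral_hasStrictDerivAt 0 y |>.hasDerivAt

theorem monotone_gaussPrimitive : Monotone gaussPrimitive :=
  monotone_of_hasDerivAt_nonneg hasDerivAt_gaussPrimitive fun _ => (Real.exp_pos _).le

@[fun_prop]
theorem continuous_gaussPrimitive : Continuous gaussPrimitive :=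
  continuous_iff_continuousAt.2 fun y => (hasDerivAt_gaussPrimitive y).continuousAt

theorem gaussPrimitive_zero : gaussPrimitive 0 = 0 :=
  intervalIntegral.integral_same

theorem mul_integral_exp_eq_barrierPrimitive_sub (h η ω : ℝ) :
    h * ∫ σ in η..ω, Real.exp (-σ ^ 2 / 4) = barrierPrimitive h 0 ω - barrierPrimitive h 0 η := by
  have hcont : Continuous fun σ : ℝ => Real.exp (-σ ^ 2 / 4) := by fun_prop
  have hsub : ∫ σ in η..ω, Real.exp (-σ ^ 2 / 4) = gaussPrimitive ω - gaussPrimitive η :=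
    (intervalIntegral.integral_interval_sub_left (hcont.intervalIntegrable 0 ω)
      (hcont.intervalIntegrable 0 η)).symm
  simp only [hsub, barrierPrimitive]
  ring

@[fun_prop]
theorem continuous_barrierPrimitive {X : Type*} [TopologicalSpace X] {f g : X → ℝ}
    (hf : Continuous f) (hg : Continuous g) :
    Continuous fun x => barrierPrimitive h (f x) (g x) := by
  unfold barrierPrimitive
  fun_prop

@[fun_prop]
theorem continuous_barrierSlope {X : Type*} [TopologicalSpace X] {f g : X → ℝ}
    (hf : Continuous f) (hg : Continuous g) :
    Continuous fun x => barrierSlope h (f x) (g x) := by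
  unfold barrierSlope
  fun_prop

theorem tendsto_barrierPrimitive_nhdsWithin (h κ y : ℝ) (S : Set ℝ) :
    Tendsto (barrierPrimitive h κ) (𝓝[S] y) (𝓝 (barrierPrimitive h κ y)) :=
  have hcont : Continuous (barrierPrimitive h κ) := by fun_prop
  hcont.continuousWithinAt

theorem tendsto_barrierPrimitive_left_nhdsWithin (h y : ℝ) (S : Set ℝ) :
    Tendsto (barrierPrimitive h · y) (𝓝[S] 0) (𝓝 (barrierPrimitive h 0 y)) :=
  have hcont : Continuous (barrierPrimitive h · y) := by fun_prop
  hcont.continuousWithinAt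

theorem tendsto_barrierSlope_left_nhdsWithin (h y : ℝ) (S : Set ℝ) :
    Tendsto (barrierSlope h · y) (𝓝[S] 0) (𝓝 (barrierSlope h 0 y)) :=
  have hcont : Continuous (barrierSlope h · y) := by fun_prop
  hcont.continuousWithinAt

theorem barrierPrimitive_zero_right (h κ : ℝ) : barrierPrimitive h κ 0 = 0 := by
  simp [barrierPrimitive, gaussPrimitive_zero]

theorem barrierPrimitive_le_barrierPrimitive (hκ : κ ≤ κ') :
    barrierPrimitive h κ y ≤ barrierPrimitive h κ' y := by
  unfold barrierPrimitive
  gcongr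

theorem hasDerivAt_barrierPrimitive (h κ y : ℝ) :
    HasDerivAt (barrierPrimitive h κ) (barrierSlope h κ y) y := by
  refine (((hasDerivAt_gaussPrimitive y).const_mul h).add
    (((hasDerivAt_pow 2 y).const_mul κ).div_const 2)).congr_deriv ?_
  simp only [barrierSlope]
  ring

-- The Gaussian part is annihilated by `P ↦ P'' + y P' / 2`, the self-similar heat operator.
theorem hasDerivAt_barrierSlope (h κ y : ℝ) :
    HasDerivAt (barrierSlope h κ) (κ * (1 + y ^ 2 / 2) - y * barrierSlope h κ y / 2) y := by
  refine (((((hasDerivAt_pow 2 y).neg.div_const 4).exp).const_mul h).add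
    ((hasDerivAt_id y).const_mul κ)).congr_deriv ?_
  simp only [barrierSlope, Pi.neg_apply]
  ring

theorem monotoneOn_barrierPrimitive (hh : 0 ≤ h) (hκ : 0 ≤ κ) :
    MonotoneOn (barrierPrimitive h κ) (Ici 0) := by
  intro y (hy : 0 ≤ y) z _ hyz
  have hΦ := monotone_gaussPrimitive hyz
  unfold barrierPrimitive
  gcongr

theorem tendsto_barrierPrimitive_atTop (hh : 0 ≤ h) (hκ : 0 < κ) :
    Tendsto (barrierPrimitive h κ) atTop atTop := by
  have hsq : Tendsto (fun y : ℝ => κ * y ^ 2 / 2) atTop atTop :=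
    ((tendsto_pow_atTop two_ne_zero).const_mul_atTop hκ).atTop_div_const two_pos
  refine tendsto_atTop_mono' _ ?_ hsq
  filter_upwards [eventually_ge_atTop 0] with y hy
  have hΦ : 0 ≤ gaussPrimitive y := gaussPrimitive_zero ▸ monotone_gaussPrimitive hy
  exact le_add_of_nonneg_left (mul_nonneg hh hΦ)

theorem strictMonoOn_half_sub_barrierSlope (hh : 0 ≤ h) (hκ : κ < 1 / 2) :
    StrictMonoOn (fun y => y / 2 - barrierSlope h κ y) (Ici 0) := by
  intro y (hy : 0 ≤ y) z _ hyz
  have hexp : h * Real.exp (-z ^ 2 / 4) ≤ h * Real.exp (-y ^ 2 / 4) := by gcongr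
  have hlin : (1 / 2 - κ) * y < (1 / 2 - κ) * z := mul_lt_mul_of_pos_left hyz (sub_pos.2 hκ)
  simp only [barrierSlope]
  linarith

theorem barrierSlope_zero_eq_half (hroot : h = ω / 2 * Real.exp (ω ^ 2 / 4)) :
    barrierSlope h 0 ω = ω / 2 := by
  rw [barrierSlope, hroot, mul_assoc, ← Real.exp_add]
  ring_nf
  simp

end Profiles

/-- The curve `A + (y₀ - A) ((t + 1) / (t₀ + 1)) ^ (-γ)`, which starts at `y₀` at time `t₀` and
relaxes to `A`. In logarithmic time `log (t + 1)` it is the solution of `σ' = -γ (σ - A)`. -/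
noncomputable def relaxation (t₀ γ y₀ A t : ℝ) : ℝ :=
  A + (y₀ - A) * ((t + 1) / (t₀ + 1)) ^ (-γ)

section Relaxation

variable {t₀ γ y₀ A t : ℝ}

theorem relaxation_self (ht₀ : 0 < t₀ + 1) : relaxation t₀ γ y₀ A t₀ = y₀ := by
  simp [relaxation, div_self ht₀.ne']

theorem hasDerivAt_relaxation (ht₀ : 0 < t₀ + 1) (ht : 0 < t + 1) :
    HasDerivAt (relaxation t₀ γ y₀ A) (-γ * (relaxation t₀ γ y₀ A t - A) / (t + 1)) t := by
  have hbase : HasDerivAt (fun τ => (τ + 1) / (t₀ + 1)) (1 / (t₀ + 1)) t :=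
    ((hasDerivAt_id t).add_const 1).div_const _
  refine (((hbase.rpow_const (p := -γ) (.inl (div_pos ht ht₀).ne')).const_mul
    (y₀ - A)).const_add A).congr_deriv ?_
  rw [Real.rpow_sub_one (div_pos ht ht₀).ne', relaxation]
  field_simp
  ring

theorem relaxation_mem_uIcc (ht₀ : 0 < t₀ + 1) (hγ : 0 ≤ γ) (ht : t₀ ≤ t) :
    relaxation t₀ γ y₀ A t ∈ uIcc A y₀ := by
  have hbase : 1 ≤ (t + 1) / (t₀ + 1) := (one_le_div ht₀).2 (by linarith)
  rw [← segment_eq_uIcc, segment_eq_image']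
  exact ⟨((t + 1) / (t₀ + 1)) ^ (-γ), ⟨by positivity,
    Real.rpow_le_one_of_one_le_of_nonpos hbase (neg_nonpos.2 hγ)⟩, by
      simp only [relaxation, smul_eq_mul, mul_comm]⟩

theorem tendsto_relaxation (ht₀ : 0 < t₀ + 1) (hγ : 0 < γ) :
    Tendsto (relaxation t₀ γ y₀ A) atTop (𝓝 A) := by
  have hbase : Tendsto (fun t : ℝ => (t + 1) / (t₀ + 1)) atTop atTop :=
    (tendsto_atTop_add_const_right _ 1 tendsto_id).atTop_div_const ht₀
  unfold relaxation
  simpa using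
    (((tendsto_rpow_neg_atTop hγ).comp hbase).const_mul (y₀ - A)).const_add A

end Relaxation

theorem eventually_forall_mul_lt {X : Type*} [TopologicalSpace X] {K : Set X} {F G : X → ℝ}
    (hK : IsCompact K) (hF : Continuous F) (hG : Continuous G) (hpos : ∀ y ∈ K, 0 < F y) :
    ∀ᶠ γ in 𝓝 (0 : ℝ), ∀ y ∈ K, γ * G y < F y := by
  refine hK.eventually_forall_of_forall_eventually fun y hy => ?_
  have hleft : Continuous fun z : ℝ × X => z.1 * G z.2 := by fun_prop
  have hright : Continuous fun z : ℝ × X => F z.2 := by fun_prop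
  exact hleft.continuousAt.eventually_lt hright.continuousAt (by simpa using hpos y hy)

theorem exists_pos_forall_mul_lt {X : Type*} [TopologicalSpace X] {K : Set X}
    {F₁ F₂ G₁ G₂ : X → ℝ} (hK : IsCompact K) (hF₁ : Continuous F₁) (hF₂ : Continuous F₂)
    (hG₁ : Continuous G₁) (hG₂ : Continuous G₂) (hpos₁ : ∀ y ∈ K, 0 < F₁ y)
    (hpos₂ : ∀ y ∈ K, 0 < F₂ y) :
    ∃ γ > 0, ∀ y ∈ K, γ * G₁ y < F₁ y ∧ γ * G₂ y < F₂ y := by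
  have hsmall := (eventually_forall_mul_lt hK hF₁ hG₁ hpos₁).and
    (eventually_forall_mul_lt hK hF₂ hG₂ hpos₂)
  obtain ⟨γ, hγ, hγ₁, hγ₂⟩ :=
    (eventually_mem_nhdsWithin.and (hsmall.filter_mono (nhdsWithin_le_nhds (s := Ioi 0)))).exists
  exact ⟨γ, hγ, fun y hy => ⟨hγ₁ y hy, hγ₂ y hy⟩⟩

section Barriers

variable {t₀ h κ A γ y₀ : ℝ} {u : ℝ → ℝ → ℝ} {s : ℝ → ℝ}

theorem isForcedStefanSolution_barrier (ht₀ : 0 < t₀ + 1) (hγ : 0 ≤ γ) (hA : 0 < A)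
    (hy₀ : 0 < y₀) :
    IsForcedStefanSolution t₀
      (fun x t => (κ * (1 + (x / √(t + 1)) ^ 2 / 2) - γ * ((relaxation t₀ γ y₀ A t - A) *
        barrierSlope h κ (relaxation t₀ γ y₀ A t))) / (t + 1))
      (fun t => h / √(t + 1))
      (fun t => (relaxation t₀ γ y₀ A t / 2 - barrierSlope h κ (relaxation t₀ γ y₀ A t) -
        γ * (relaxation t₀ γ y₀ A t - A)) / √(t + 1))
      (fun x t => barrierPrimitive h κ (relaxation t₀ γ y₀ A t) -
        barrierPrimitive h κ (x / √(t + 1)))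
      (fun t => relaxation t₀ γ y₀ A t * √(t + 1)) := by
  have hpos : ∀ t ≥ t₀, 0 < relaxation t₀ γ y₀ A t := fun t ht =>
    (lt_min hA hy₀).trans_le (relaxation_mem_uIcc ht₀ hγ ht).1
  convert isForcedStefanSolution_selfSimilar ht₀ (hasDerivAt_barrierPrimitive h κ)
    (hasDerivAt_barrierSlope h κ)
    (fun t ht => hasDerivAt_relaxation ht₀ (by linarith : 0 < t + 1)) hpos using 3
  · ring
  · simp [barrierSlope]
  · ring

theorem exists_initial_barrier_above
    (hu : ContinuousOn (u · t₀) (Icc 0 (s t₀))) (ht₀ : 0 < t₀ + 1) (hh : 0 ≤ h) (hκ : 0 < κ) :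
    ∃ y₀ > A, s t₀ < y₀ * √(t₀ + 1) ∧ ∀ x ∈ Icc 0 (s t₀),
      u x t₀ ≤ barrierPrimitive h κ y₀ - barrierPrimitive h κ (x / √(t₀ + 1)) := by
  have hcont : ContinuousOn (fun x => u x t₀ + barrierPrimitive h κ (x / √(t₀ + 1)))
      (Icc 0 (s t₀)) := hu.add (by fun_prop)
  obtain ⟨M, hM⟩ := isCompact_Icc.bddAbove_image hcont
  obtain ⟨y₀, hA, hs, hP⟩ := ((eventually_gt_atTop A).and
    ((eventually_gt_atTop (s t₀ / √(t₀ + 1))).and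
      ((tendsto_barrierPrimitive_atTop hh hκ).eventually_ge_atTop M))).exists
  exact ⟨y₀, hA, (div_lt_iff₀ (Real.sqrt_pos.2 ht₀)).1 hs, fun x hx =>
    le_sub_iff_add_le.2 ((hM (mem_image_of_mem _ hx)).trans hP)⟩

theorem exists_initial_barrier_below
    (hu : ContinuousOn (u · t₀) (Icc 0 (s t₀))) (hs : 0 < s t₀) (hu₀ : 0 < u 0 t₀)
    (hA : 0 < A) :
    ∃ y₀ ∈ Ioo 0 A, y₀ * √(t₀ + 1) < s t₀ ∧ ∀ x ∈ Icc 0 (y₀ * √(t₀ + 1)),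
      barrierPrimitive h κ y₀ - barrierPrimitive h κ (x / √(t₀ + 1)) ≤ u x t₀ := by
  have hcont : ContinuousOn (fun x => u x t₀ + barrierPrimitive h κ (x / √(t₀ + 1)))
      (Icc 0 (s t₀)) := hu.add (by fun_prop)
  have hnear : ∀ᶠ x in 𝓝[≥] 0,
      u 0 t₀ / 2 < u x t₀ + barrierPrimitive h κ (x / √(t₀ + 1)) := by
    rw [← nhdsWithin_Icc_eq_nhdsGE hs]
    refine (hcont 0 (left_mem_Icc.2 hs.le)).eventually (lt_mem_nhds ?_)
    simpa [barrierPrimitive_zero_right] using half_lt_self hu₀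
  obtain ⟨δ, hδ, hδ_near⟩ := (mem_nhdsGE_iff_exists_Icc_subset).1 hnear
  have hscale : Tendsto (fun y => y * √(t₀ + 1)) (𝓝[>] 0) (𝓝 0) := by
    have : Continuous fun y : ℝ => y * √(t₀ + 1) := by fun_prop
    simpa using (this.tendsto 0).mono_left nhdsWithin_le_nhds
  have hP : Tendsto (barrierPrimitive h κ) (𝓝[>] 0) (𝓝 0) := by
    simpa only [barrierPrimitive_zero_right] using tendsto_barrierPrimitive_nhdsWithin h κ 0 (Ioi 0)
  obtain ⟨y₀, hy₀, hys, hyδ, hPy⟩ := (Eventually.and (Ioo_mem_nhdsGT hA)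
    ((hscale.eventually (gt_mem_nhds hs)).and
      ((hscale.eventually (gt_mem_nhds hδ)).and
        (hP.eventually (gt_mem_nhds (half_pos hu₀)))))).exists
  refine ⟨y₀, hy₀, hys, fun x hx => sub_le_iff_le_add.2 (hPy.le.trans ?_)⟩
  exact (hδ_near ⟨hx.1, hx.2.trans hyδ.le⟩ : _ < _).le

theorem exists_barrier_above
    (hus : IsNSPSolutionFrom t₀ h u s)
    (ht₀ : 0 < t₀ + 1) (hh : 0 ≤ h) (hκ : 0 < κ) (hA : 0 < A)
    (hslope : barrierSlope h κ A < A / 2) :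
    ∃ σ : ℝ → ℝ, Tendsto σ atTop (𝓝 A) ∧ ∀ t ≥ t₀, s t < σ t * √(t + 1) ∧
      ∀ x ∈ Icc 0 (s t),
        u x t ≤ barrierPrimitive h κ (σ t) - barrierPrimitive h κ (x / √(t + 1)) := by
  obtain ⟨y₀, hAy₀, hs₀, hu₀⟩ := exists_initial_barrier_above (A := A)
    (hus.continuousOn_slice le_rfl) ht₀ hh hκ
  have hκ_lt : κ < 1 / 2 := by
    have : 0 ≤ h * Real.exp (-A ^ 2 / 4) := by positivity
    unfold barrierSlope at hslope
    nlinarith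
  have hstefan : ∀ y ∈ Icc A y₀, 0 < y / 2 - barrierSlope h κ y := fun y hy =>
    (sub_pos.2 hslope).trans_le
      ((strictMonoOn_half_sub_barrierSlope hh hκ_lt).monotoneOn hA.le (hA.le.trans hy.1) hy.1)
  obtain ⟨γ, hγ, hγ_small⟩ := exists_pos_forall_mul_lt (isCompact_Icc (a := A) (b := y₀))
    (F₁ := fun _ => κ) (F₂ := fun y => y / 2 - barrierSlope h κ y)
    (G₁ := fun y => (y - A) * barrierSlope h κ y) (G₂ := fun y => y - A)
    (by fun_prop) (by fun_prop) (by fun_prop) (by fun_prop) (fun _ _ => hκ) hstefan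
  have hmem : ∀ t ≥ t₀, relaxation t₀ γ y₀ A t ∈ Icc A y₀ := fun t ht =>
    uIcc_of_le hAy₀.le ▸ relaxation_mem_uIcc ht₀ hγ.le ht
  refine ⟨_, tendsto_relaxation ht₀ hγ, hus.comparison
    (isForcedStefanSolution_barrier ht₀ hγ.le hA (hA.trans hAy₀)) ?_ (fun _ _ => le_rfl)
    ?_ ?_ (by simpa only [relaxation_self ht₀] using hu₀)
    (by simpa only [relaxation_self ht₀] using hs₀)⟩
  · intro t ht x _
    have hγκ := (hγ_small _ (hmem t ht.le)).1
    have hκη : 0 ≤ κ * (x / √(t + 1)) ^ 2 := by positivity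
    exact div_nonneg (by linarith) (by linarith)
  · intro t ht
    exact div_pos (sub_pos.2 (hγ_small _ (hmem t ht.le)).2) (Real.sqrt_pos.2 (by linarith))
  · intro t ht x hx
    have hsqrt : 0 < √(t + 1) := Real.sqrt_pos.2 (by linarith)
    exact sub_nonneg.2 (monotoneOn_barrierPrimitive hh hκ.le (div_nonneg hx.1 hsqrt.le)
      (hA.le.trans (hmem t ht.le).1) ((div_le_iff₀ hsqrt).2 hx.2))

theorem exists_barrier_below
    (hus : IsNSPSolutionFrom t₀ h u s)
    (hu_nonneg : ∀ t > t₀, ∀ x ∈ Icc 0 (s t), 0 ≤ u x t) (hu_pos : 0 < u 0 t₀)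
    (ht₀ : 0 < t₀ + 1) (hh : 0 ≤ h) (hκ : κ < 0) (hA : 0 < A)
    (hslope : A / 2 < barrierSlope h κ A) :
    ∃ σ : ℝ → ℝ, Tendsto σ atTop (𝓝 A) ∧ ∀ t ≥ t₀, σ t * √(t + 1) < s t ∧
      ∀ x ∈ Icc 0 (σ t * √(t + 1)),
        barrierPrimitive h κ (σ t) - barrierPrimitive h κ (x / √(t + 1)) ≤ u x t := by
  obtain ⟨y₀, ⟨hy₀, hy₀A⟩, hs₀, hu₀⟩ := exists_initial_barrier_below (h := h) (κ := κ)
    (hus.continuousOn_slice le_rfl) (hus.boundary_pos t₀ le_rfl) hu_pos hA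
  have hstefan : ∀ y ∈ Icc y₀ A, 0 < barrierSlope h κ y - y / 2 := fun y hy => by
    have := (strictMonoOn_half_sub_barrierSlope hh (by linarith : κ < 1 / 2)).monotoneOn
      (hy₀.le.trans hy.1) hA.le hy.2
    linarith
  obtain ⟨γ, hγ, hγ_small⟩ := exists_pos_forall_mul_lt (isCompact_Icc (a := y₀) (b := A))
    (F₁ := fun _ => -κ) (F₂ := fun y => barrierSlope h κ y - y / 2)
    (G₁ := fun y => (A - y) * barrierSlope h κ y) (G₂ := fun y => A - y)
    (by fun_prop) (by fun_prop) (by fun_prop) (by fun_prop) (fun _ _ => neg_pos.2 hκ) hstefan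
  have hmem : ∀ t ≥ t₀, relaxation t₀ γ y₀ A t ∈ Icc y₀ A := fun t ht =>
    uIcc_of_ge hy₀A.le ▸ relaxation_mem_uIcc ht₀ hγ.le ht
  refine ⟨_, tendsto_relaxation ht₀ hγ, (isForcedStefanSolution_barrier ht₀ hγ.le hA hy₀).comparison
    hus ?_ (fun _ _ => le_rfl) ?_ hu_nonneg (by simpa only [relaxation_self ht₀] using hu₀)
    (by simpa only [relaxation_self ht₀] using hs₀)⟩
  · intro t ht x _
    have hγκ := (hγ_small _ (hmem t ht.le)).1
    have hκη : κ * (x / √(t + 1)) ^ 2 ≤ 0 := mul_nonpos_of_nonpos_of_nonneg hκ.le (sq_nonneg _)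
    exact div_nonpos_of_nonpos_of_nonneg (by linarith) (by linarith)
  · intro t ht
    have hγs := (hγ_small _ (hmem t ht.le)).2
    exact div_neg_of_neg_of_pos (by linarith) (Real.sqrt_pos.2 (by linarith))

end Barriers

/-! ### Classical solutions of (NSP) -/

namespace IsClassicalSolNSP

variable {h b0 t x : ℝ} {u0 s : ℝ → ℝ} {u : ℝ → ℝ → ℝ}

theorem continuousOn_boundary (hsol : IsClassicalSolNSP h b0 u0 u s) : ContinuousOn s (Ici 0) :=
  hsol.1.continuousOn

theorem continuousOn (hsol : IsClassicalSolNSP h b0 u0 u s) :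
    ContinuousOn (Function.uncurry u) (regionUnder s (Ici 0)) := by
  obtain ⟨-, -, hu, -⟩ := hsol
  exact hu

theorem boundary_eq_zero (hsol : IsClassicalSolNSP h b0 u0 u s) (ht : 0 < t) : u (s t) t = 0 := by
  obtain ⟨-, -, -, -, -, -, -, -, hzero, -⟩ := hsol
  exact hzero t ht

theorem hasHeatResidual_zero (hsol : IsClassicalSolNSP h b0 u0 u s) (ht : 0 < t)
    (hx : x ∈ Ioo 0 (s t)) : HasHeatResidual u 0 x t := by
  obtain ⟨-, -, -, -, -, -, hheat, -⟩ := hsol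
  obtain ⟨hut, -, huxx, heq⟩ := hheat t ht x hx.1 hx.2
  refine ⟨_, _, _, ?_, huxx.hasDerivAt, hut.hasDerivAt, sub_eq_zero.2 heq⟩
  filter_upwards [Ioo_mem_nhds hx.1 hx.2] with y hy
  exact (hheat t ht y hy.1 hy.2).2.1.hasDerivAt

-- A nonzero value of `deriv` certifies differentiability.
theorem hasDerivAt_zero (hsol : IsClassicalSolNSP h b0 u0 u s) (hh : 0 < h) (ht : 0 < t) :
    HasDerivAt (u · t) (-(h / √(t + 1))) 0 := by
  obtain ⟨-, -, -, -, -, -, -, hflux, -⟩ := hsol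
  have hpos : 0 < h / √(t + 1) := by positivity
  have hderiv : deriv (u · t) 0 = -(h / √(t + 1)) := neg_eq_iff_eq_neg.1 (hflux t ht)
  have hne : deriv (u · t) 0 ≠ 0 := hderiv ▸ neg_ne_zero.2 hpos.ne'
  exact hderiv ▸ (differentiableAt_of_deriv_ne_zero hne).hasDerivAt

theorem hasDerivWithinAt_boundary (hsol : IsClassicalSolNSP h b0 u0 u s) (ht : 0 < t)
    (hs : 0 < s t) : HasDerivWithinAt (u · t) (-deriv s t) (Iic (s t)) (s t) := by
  have hcont := hsol.continuousOn
  obtain ⟨-, -, -, hux, -, -, hheat, -, -, hstefan, -⟩ := hsol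
  rw [hstefan t ht, neg_neg]
  have hu : ContinuousOn (u · t) (Icc 0 (s t)) :=
    hcont.comp (f := fun y : ℝ => (y, t)) (by fun_prop) fun y hy => ⟨ht.le, hy⟩
  have hux_slice : ContinuousOn (deriv (u · t)) (Icc 0 (s t)) :=
    hux.comp (f := fun y : ℝ => (y, t)) (by fun_prop) fun y hy => ⟨ht, hy⟩
  have hmem : s t ∈ Icc 0 (s t) := right_mem_Icc.2 hs.le
  refine hasDerivWithinAt_Iic_of_tendsto_deriv (s := Ioo 0 (s t))
    (fun y hy => (hheat t ht y hy.1 hy.2).2.1.differentiableWithinAt)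
    ((hu _ hmem).mono Ioo_subset_Icc_self) (Ioo_mem_nhdsLT hs) ?_
  rw [← nhdsWithin_Ioo_eq_nhdsLT hs]
  exact (hux_slice _ hmem).mono Ioo_subset_Icc_self

theorem hasDerivAt_boundary (hsol : IsClassicalSolNSP h b0 u0 u s) (ht : 0 < t) :
    HasDerivAt s (deriv s t) t :=
  ((hsol.1.differentiableOn one_ne_zero).differentiableAt (Ici_mem_nhds ht)).hasDerivAt

theorem initial_nonneg (hsol : IsClassicalSolNSP h b0 u0 u s) (hb0 : 0 < b0)
    (hu0 : ∀ x ∈ Ioo 0 b0, 0 ≤ u0 x) : ∀ x ∈ Icc 0 (s 0), 0 ≤ u x 0 := by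
  have hcont := hsol.continuousOn
  obtain ⟨-, rfl, -, -, -, -, -, -, -, -, hinit⟩ := hsol
  have hslice : ContinuousOn (u · 0) (closure (Ioo 0 (s 0))) :=
    hcont.comp (f := fun x : ℝ => (x, (0 : ℝ))) (by fun_prop)
      fun x hx => ⟨self_mem_Ici, closure_Ioo hb0.ne ▸ hx⟩
  intro x hx
  rw [← closure_Ioo hb0.ne] at hx
  exact le_on_closure (f := fun _ => 0) (fun y hy => hinit y hy.1 hy.2 ▸ hu0 y hy)
    continuousOn_const hslice hx

theorem nonneg (hsol : IsClassicalSolNSP h b0 u0 u s) (hh : 0 < h) (hb0 : 0 < b0)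
    (hu0 : ∀ x ∈ Ioo 0 b0, 0 ≤ u0 x) (ht : 0 ≤ t) : ∀ x ∈ Icc 0 (s t), 0 ≤ u x t := by
  refine heat_min_principle (hsol.continuousOn_boundary.mono Icc_subset_Ici_self)
    (hsol.continuousOn.mono fun _ hp => ⟨hp.1.1, hp.2⟩) (hsol.initial_nonneg hb0 hu0)
    (fun τ hτ => (hsol.boundary_eq_zero hτ.1).ge) (fun τ hτ => ?_)
    (fun τ hτ y hy => ⟨0, le_rfl, hsol.hasHeatResidual_zero hτ.1 hy⟩) t (right_mem_Icc.2 ht)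
  exact ⟨_, neg_nonpos.2 (by positivity), (hsol.hasDerivAt_zero hh hτ.1).hasDerivWithinAt⟩

-- While `s > 0`, nonnegativity of `u` forces `s' ≥ 0`, so `s` cannot reach the decaying curve.
theorem boundary_pos (hsol : IsClassicalSolNSP h b0 u0 u s) (hh : 0 < h) (hb0 : 0 < b0)
    (hu0 : ∀ x ∈ Ioo 0 b0, 0 ≤ u0 x) (ht : 0 ≤ t) : 0 < s t := by
  suffices hlower : ∀ t ≥ 0, 0 < s t - b0 / 2 * Real.exp (-t) from
    (by positivity : 0 < b0 / 2 * Real.exp (-t)).trans (sub_pos.1 (hlower t ht))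
  refine pos_of_deriv_pos_at_first_zero
    (hsol.continuousOn_boundary.sub (by fun_prop)) ?_ fun t₁ ht₁ _ hmeet => ?_
  · simpa [hsol.2.1] using hb0
  · have hcurve : 0 < b0 / 2 * Real.exp (-t₁) := by positivity
    have hs : 0 < s t₁ := hcurve.trans_eq (sub_eq_zero.1 hmeet).symm
    have hmin : IsLocalMinOn (u · t₁) (Iic (s t₁)) (s t₁) := by
      filter_upwards [Ioc_mem_nhdsLE hs] with x hx
      exact (hsol.boundary_eq_zero ht₁).trans_le
        (hsol.nonneg hh hb0 hu0 ht₁.le x (Ioc_subset_Icc_self hx))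
    have hspeed := deriv_nonpos_of_isLocalMinOn_Iic hmin (hsol.hasDerivWithinAt_boundary ht₁ hs)
    refine ⟨deriv s t₁ + b0 / 2 * Real.exp (-t₁), by linarith, ?_⟩
    exact ((hsol.hasDerivAt_boundary ht₁).sub
      ((hasDerivAt_neg t₁).exp.const_mul (b0 / 2))).congr_deriv (by ring)

theorem isNSPSolutionFrom_zero (hsol : IsClassicalSolNSP h b0 u0 u s) (hh : 0 < h) (hb0 : 0 < b0)
    (hu0 : ∀ x ∈ Ioo 0 b0, 0 ≤ u0 x) :
    IsNSPSolutionFrom 0 h u s where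
  boundary_continuousOn := hsol.continuousOn_boundary
  boundary_pos _ ht := hsol.boundary_pos hh hb0 hu0 ht
  continuousOn := hsol.continuousOn
  heat _ ht _ hx := hsol.hasHeatResidual_zero ht hx
  flux _ ht := (hsol.hasDerivAt_zero hh ht).hasDerivWithinAt
  boundary_eq_zero _ ht := hsol.boundary_eq_zero ht
  stefan t ht := ⟨-deriv s t,
    hsol.hasDerivWithinAt_boundary ht (hsol.boundary_pos hh hb0 hu0 (le_of_lt ht)),
    by simpa using hsol.hasDerivAt_boundary ht⟩

-- A zero of `u(·, t)` at `x = 0` would be a minimum, against the negative slope there.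
theorem pos_at_zero (hsol : IsClassicalSolNSP h b0 u0 u s) (hh : 0 < h) (hb0 : 0 < b0)
    (hu0 : ∀ x ∈ Ioo 0 b0, 0 ≤ u0 x) (ht : 0 < t) : 0 < u 0 t := by
  have hnonneg := hsol.nonneg hh hb0 hu0 ht.le
  have hs := hsol.boundary_pos hh hb0 hu0 ht.le
  refine (hnonneg 0 (left_mem_Icc.2 hs.le)).lt_of_ne fun hzero => ?_
  have hmin : IsLocalMinOn (u · t) (Ici 0) 0 := by
    filter_upwards [Ico_mem_nhdsGE hs] with x hx
    exact hzero.symm.trans_le (hnonneg x (Ico_subset_Icc_self hx))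
  have hslope := deriv_nonneg_of_isLocalMinOn_Ici hmin (hsol.hasDerivAt_zero hh ht).hasDerivWithinAt
  exact (neg_nonneg.1 hslope).not_gt (by positivity)

end IsClassicalSolNSP

/-! ### Convergence to the self-similar profile -/

section Convergence

variable {t₀ h ω ε : ℝ} {u : ℝ → ℝ → ℝ} {s : ℝ → ℝ}

theorem exists_barrier_params_above (hh : 0 ≤ h) (hω : 0 ≤ ω)
    (hslope : barrierSlope h 0 ω = ω / 2) (hε : 0 < ε) :
    ∃ A ∈ Ioo ω (ω + ε), ∃ κ > 0, barrierSlope h κ A < A / 2 ∧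
      barrierPrimitive h κ A < barrierPrimitive h 0 ω + ε := by
  obtain ⟨A, hA, hPA⟩ := (Eventually.and (Ioo_mem_nhdsGT (lt_add_of_pos_right ω hε))
    ((tendsto_barrierPrimitive_nhdsWithin h 0 ω (Ioi ω)).eventually_lt_const
      (lt_add_of_pos_right _ hε))).exists
  have hslopeA : barrierSlope h 0 A < A / 2 := by
    have hmono :=
      strictMonoOn_half_sub_barrierSlope hh one_half_pos hω (hω.trans hA.1.le) hA.1
    simpa [hslope] using hmono
  obtain ⟨κ, hκ, hκ_slope, hκ_P⟩ := (eventually_mem_nhdsWithin.and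
    (((tendsto_barrierSlope_left_nhdsWithin h A (Ioi 0)).eventually_lt_const hslopeA).and
      ((tendsto_barrierPrimitive_left_nhdsWithin h A (Ioi 0)).eventually_lt_const hPA))).exists
  exact ⟨A, hA, κ, hκ, hκ_slope, hκ_P⟩

theorem exists_barrier_params_below (hh : 0 ≤ h) (hω : 0 < ω)
    (hslope : barrierSlope h 0 ω = ω / 2) (hε : 0 < ε) :
    ∃ A ∈ Ioo (max 0 (ω - ε)) ω, ∃ κ < 0, A / 2 < barrierSlope h κ A ∧
      barrierPrimitive h 0 ω - ε < barrierPrimitive h κ A := by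
  obtain ⟨A, hA, hPA⟩ := (Eventually.and (Ioo_mem_nhdsLT (max_lt hω (sub_lt_self ω hε)))
    ((tendsto_barrierPrimitive_nhdsWithin h 0 ω (Iio ω)).eventually_const_lt
      (sub_lt_self _ hε))).exists
  have hslopeA : A / 2 < barrierSlope h 0 A := by
    have hmono := strictMonoOn_half_sub_barrierSlope hh one_half_pos
      ((le_max_left 0 _).trans hA.1.le) hω.le hA.2
    simpa [hslope] using hmono
  obtain ⟨κ, hκ, hκ_slope, hκ_P⟩ := (eventually_mem_nhdsWithin.and
    (((tendsto_barrierSlope_left_nhdsWithin h A (Iio 0)).eventually_const_lt hslopeA).and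
      ((tendsto_barrierPrimitive_left_nhdsWithin h A (Iio 0)).eventually_const_lt hPA))).exists
  exact ⟨A, hA, κ, hκ, hκ_slope, hκ_P⟩

theorem eventually_le_profile_add
    (hus : IsNSPSolutionFrom t₀ h u s)
    (ht₀ : 0 < t₀ + 1) (hh : 0 ≤ h) (hω : 0 ≤ ω) (hslope : barrierSlope h 0 ω = ω / 2)
    (hε : 0 < ε) :
    ∀ᶠ t in atTop, s t / √(t + 1) < ω + ε ∧ ∀ x ∈ Icc 0 (s t),
      u x t ≤ barrierPrimitive h 0 ω - barrierPrimitive h 0 (x / √(t + 1)) + ε := by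
  obtain ⟨A, hA, κ, hκ, hκ_slope, hκ_P⟩ := exists_barrier_params_above hh hω hslope hε
  obtain ⟨σ, hσ, hbarrier⟩ :=
    exists_barrier_above hus ht₀ hh hκ (hω.trans_lt hA.1) hκ_slope
  have hσ_P : Tendsto (fun t => barrierPrimitive h κ (σ t)) atTop (𝓝 (barrierPrimitive h κ A)) :=
    (hasDerivAt_barrierPrimitive h κ A).continuousAt.tendsto.comp hσ
  filter_upwards [eventually_ge_atTop t₀, hσ.eventually_lt_const hA.2,
    hσ_P.eventually_lt_const hκ_P] with t ht hσ_lt hP_lt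
  have hsqrt : 0 < √(t + 1) := Real.sqrt_pos.2 (by linarith)
  obtain ⟨hs, hu⟩ := hbarrier t ht
  refine ⟨((div_lt_iff₀ hsqrt).2 hs).trans hσ_lt, fun x hx => ?_⟩
  have hκη : barrierPrimitive h 0 (x / √(t + 1)) ≤ barrierPrimitive h κ (x / √(t + 1)) :=
    barrierPrimitive_le_barrierPrimitive hκ.le
  linarith [hu x hx]

theorem eventually_profile_sub_le
    (hus : IsNSPSolutionFrom t₀ h u s)
    (hu_nonneg : ∀ t > t₀, ∀ x ∈ Icc 0 (s t), 0 ≤ u x t) (hu_pos : 0 < u 0 t₀)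
    (ht₀ : 0 < t₀ + 1) (hh : 0 ≤ h) (hω : 0 < ω) (hslope : barrierSlope h 0 ω = ω / 2)
    (hε : 0 < ε) :
    ∀ᶠ t in atTop, ω - ε < s t / √(t + 1) ∧ ∀ x ∈ Icc 0 (s t),
      barrierPrimitive h 0 ω - barrierPrimitive h 0 (x / √(t + 1)) - ε ≤ u x t := by
  obtain ⟨A, hA, κ, hκ, hκ_slope, hκ_P⟩ := exists_barrier_params_below hh hω hslope hε
  obtain ⟨hA_pos, hA_gt⟩ := max_lt_iff.1 hA.1
  obtain ⟨σ, hσ, hbarrier⟩ :=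
    exists_barrier_below hus hu_nonneg hu_pos ht₀ hh hκ hA_pos hκ_slope
  have hσ_P : Tendsto (fun t => barrierPrimitive h κ (σ t)) atTop (𝓝 (barrierPrimitive h κ A)) :=
    (hasDerivAt_barrierPrimitive h κ A).continuousAt.tendsto.comp hσ
  filter_upwards [eventually_gt_atTop t₀, hσ.eventually_const_lt hA_gt,
    hσ.eventually_const_lt hA_pos, hσ_P.eventually_const_lt hκ_P] with t ht hσ_gt hσ_pos hP_gt
  have hsqrt : 0 < √(t + 1) := Real.sqrt_pos.2 (by linarith)
  obtain ⟨hs, hu⟩ := hbarrier t ht.le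
  have hκ_le : ∀ y, barrierPrimitive h κ y ≤ barrierPrimitive h 0 y := fun y =>
    barrierPrimitive_le_barrierPrimitive hκ.le
  refine ⟨hσ_gt.trans ((lt_div_iff₀ hsqrt).2 hs), fun x hx => ?_⟩
  rcases le_or_gt x (σ t * √(t + 1)) with hxσ | hσx
  · linarith [hu x ⟨hx.1, hxσ⟩, hκ_le (x / √(t + 1))]
  · have hmono : barrierPrimitive h 0 (σ t) ≤ barrierPrimitive h 0 (x / √(t + 1)) :=
      monotoneOn_barrierPrimitive hh le_rfl hσ_pos.le (div_nonneg hx.1 hsqrt.le)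
        ((le_div_iff₀ hsqrt).2 hσx.le)
    linarith [hu_nonneg t ht x hx, hκ_le (σ t)]

theorem tendsto_boundary_div_sqrt
    (hus : IsNSPSolutionFrom t₀ h u s)
    (hu_nonneg : ∀ t > t₀, ∀ x ∈ Icc 0 (s t), 0 ≤ u x t) (hu_pos : 0 < u 0 t₀)
    (ht₀ : 0 < t₀ + 1) (hh : 0 ≤ h) (hω : 0 < ω) (hslope : barrierSlope h 0 ω = ω / 2) :
    Tendsto (fun t => s t / √(t + 1)) atTop (𝓝 ω) := by
  refine tendsto_order.2 ⟨fun a ha => ?_, fun a ha => ?_⟩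
  · filter_upwards [eventually_profile_sub_le hus hu_nonneg hu_pos ht₀ hh hω hslope
      (sub_pos.2 ha)] with t ht
    linarith [ht.1]
  · filter_upwards [eventually_le_profile_add hus ht₀ hh hω.le hslope (sub_pos.2 ha)] with t ht
    linarith [ht.1]

theorem eventually_abs_zeroExtension_sub_profile_lt
    (hus : IsNSPSolutionFrom t₀ h u s)
    (hu_nonneg : ∀ t > t₀, ∀ x ∈ Icc 0 (s t), 0 ≤ u x t) (hu_pos : 0 < u 0 t₀)
    (ht₀ : 0 < t₀ + 1) (hh : 0 ≤ h) (hω : 0 < ω) (hslope : barrierSlope h 0 ω = ω / 2)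
    (hε : 0 < ε) :
    ∀ᶠ t in atTop, ∀ x, 0 ≤ x → x / √(t + 1) ≤ ω →
      |(if x ≤ s t then u x t else 0) -
        (barrierPrimitive h 0 ω - barrierPrimitive h 0 (x / √(t + 1)))| < ε := by
  filter_upwards [eventually_gt_atTop t₀,
    eventually_le_profile_add hus ht₀ hh hω.le hslope (half_pos hε),
    eventually_profile_sub_le hus hu_nonneg hu_pos ht₀ hh hω hslope (half_pos hε)]
    with t ht ⟨_, hupper⟩ ⟨_, hlower⟩ x hx hxω
  rw [abs_lt]
  split_ifs with hxs
  · constructor <;> linarith [hupper x ⟨hx, hxs⟩, hlower x ⟨hx, hxs⟩]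
  · have hsqrt : 0 ≤ √(t + 1) := Real.sqrt_nonneg _
    have hs : 0 ≤ s t := (hus.boundary_pos t ht.le).le
    have hmono := monotoneOn_barrierPrimitive hh le_rfl
    have hxη : 0 ≤ x / √(t + 1) := div_nonneg hx hsqrt
    have hlower_boundary := hlower (s t) (right_mem_Icc.2 hs)
    rw [hus.boundary_eq_zero t ht] at hlower_boundary
    have hs_le_x : barrierPrimitive h 0 (s t / √(t + 1)) ≤ barrierPrimitive h 0 (x / √(t + 1)) :=
      hmono (div_nonneg hs hsqrt) hxη (by gcongr; exact (not_le.1 hxs).le)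
    have hx_le_ω : barrierPrimitive h 0 (x / √(t + 1)) ≤ barrierPrimitive h 0 ω :=
      hmono hxη hω.le hxω
    constructor <;> linarith

end Convergence

theorem NSP_convergence_to_self_similar_profile_general
    {h b0 ω : ℝ} (hb0 : 0 < b0) {u0 : ℝ → ℝ} (hu0 : ∀ x ∈ Ioo 0 b0, 0 ≤ u0 x)
    {u : ℝ → ℝ → ℝ} {s : ℝ → ℝ} (hsol : IsClassicalSolNSP h b0 u0 u s)
    (hω : 0 < ω) (hroot : h = ω / 2 * Real.exp (ω ^ 2 / 4))
    {U : ℝ → ℝ} (hU : ∀ η, U η = h * ∫ σ in η..ω, Real.exp (-σ ^ 2 / 4)) :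
    Tendsto (fun t => s t / √(t + 1)) atTop (𝓝 ω) ∧
    (∀ ε > (0 : ℝ), ∃ T : ℝ, ∀ t ≥ T, ∀ x, 0 ≤ x → x / √(t + 1) ≤ ω →
      |(if x ≤ s t then u x t else 0) - U (x / √(t + 1))| < ε) := by
  have hh : 0 < h := hroot ▸ by positivity
  have hus := (hsol.isNSPSolutionFrom_zero hh hb0 hu0).mono zero_le_one
  have hnonneg : ∀ t > 1, ∀ x ∈ Icc 0 (s t), 0 ≤ u x t := fun t ht =>
    hsol.nonneg hh hb0 hu0 (zero_le_one.trans (le_of_lt ht))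
  have hpos : 0 < u 0 1 := hsol.pos_at_zero hh hb0 hu0 one_pos
  have hslope : barrierSlope h 0 ω = ω / 2 := barrierSlope_zero_eq_half hroot
  simp only [hU, mul_integral_exp_eq_barrierPrimitive_sub]
  exact ⟨tendsto_boundary_div_sqrt hus hnonneg hpos (by norm_num) hh.le hω hslope,
    fun ε hε => eventually_atTop.1 <| eventually_abs_zeroExtension_sub_profile_lt hus hnonneg hpos
      (by norm_num) hh.le hω hslope hε⟩

/-- Theorem 1.1: for `h > 0`, `b0 > 0` and `u0 ∈ W^{1,∞}(0,∞)` with `u0 ≥ 0`,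
`u0 0 > 0`, `u0 = 0` on `[b0, ∞)`, the solution `(u, s)` of (NSP) satisfies
`s t / √(t+1) → ω` and `sup_{x/√(t+1) ∈ [0,ω]} |u(x,t) - U(x/√(t+1))| → 0`
as `t → ∞`, where `u` is extended by zero for `x > s t` and `(U, ω)` is the
self-similar profile. -/
theorem NSP_convergence_to_self_similar_profile
    (h b0 ω : ℝ) (hh : 0 < h) (hb0 : 0 < b0)
    (u0 : ℝ → ℝ)
    (hlip : ∃ M : NNReal, LipschitzOnWith M u0 (Set.Ici 0))
    (hbdd : ∃ C : ℝ, ∀ x ∈ Set.Ici (0:ℝ), |u0 x| ≤ C)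
    (hpos : ∀ x ∈ Set.Ici (0:ℝ), 0 ≤ u0 x)
    (hu00 : 0 < u0 0)
    (hzero : ∀ x ∈ Set.Ici b0, u0 x = 0)
    (u : ℝ → ℝ → ℝ) (s : ℝ → ℝ)
    (hsol : IsClassicalSolNSP h b0 u0 u s)
    (hω : 0 < ω) (hroot : h = ω / 2 * Real.exp (ω ^ 2 / 4))
    (U : ℝ → ℝ)
    (hU : ∀ η, U η = h * ∫ σ in η..ω, Real.exp (-σ ^ 2 / 4)) :
    Filter.Tendsto (fun t => s t / Real.sqrt (t + 1)) Filter.atTop (nhds ω) ∧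
    (∀ ε > (0:ℝ), ∃ T : ℝ, ∀ t ≥ T, ∀ x, 0 ≤ x → x / Real.sqrt (t + 1) ≤ ω →
      |(if x ≤ s t then u x t else 0) - U (x / Real.sqrt (t + 1))| < ε) := by
  exact NSP_convergence_to_self_similar_profile_general hb0 (fun x hx => hpos x hx.1.le) hsol hω
    hroot hU
end

section
/- Let λ > 0 and h̃ > 0. Then the equation h̃ = (x/2)·e^{λx²/4} has a unique positive solution b_λ, and the pair (U_λ, b_λ) with U_λ(η) = h̃·∫_η^{b_λ} e^{−λs²/4} ds solves the perturbed stationary problem: U_λ''(η) + (λη/2)·U_λ'(η) = 0 for 0 < η < b_λ; −U_λ'(0) = h̃; U_λ(b_λ) = 0; and b_λ/2 = −U_λ'(b_λ). -/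
/-!
The equation `U'' + g U' = 0` has the integrating factor `exp G` with `G' = g`, so `exp G * U'` is
constant. Normalising `G 0 = 0`, the conditions `-U' 0 = h` and `U b = 0` force
`U η = h ∫_η^b exp (-G)`, and the free boundary condition `b / 2 = -U' b` becomes
`h = b / 2 * exp (G b)`. The right-hand side of the latter increases strictly from `0` to `∞` as
soon as `G` is nondecreasing on `[0, ∞)`. The theorem is the case `g η = λ η / 2`,
`G η = λ η² / 4`.
-/

open Real Set Filter

section FreeBoundaryEquation

variable {f : ℝ → ℝ}

theorem strictMonoOn_id_mul (hf : MonotoneOn f (Ici 0)) (hf0 : 0 < f 0) :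
    StrictMonoOn (fun x ↦ x * f x) (Ici 0) := by
  intro x hx y hy hxy
  have hfy : 0 < f y := hf0.trans_le (hf self_mem_Ici hy hy)
  calc
    x * f x ≤ x * f y := mul_le_mul_of_nonneg_left (hf hx hy hxy.le) hx
    _ < y * f y := mul_lt_mul_of_pos_right hxy hfy

theorem tendsto_id_mul_atTop (hf : MonotoneOn f (Ici 0)) (hf0 : 0 < f 0) :
    Tendsto (fun x ↦ x * f x) atTop atTop := by
  refine tendsto_atTop_mono' atTop ?_ (tendsto_id.atTop_mul_const hf0)
  filter_upwards [eventually_ge_atTop 0] with x hx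
  exact mul_le_mul_of_nonneg_left (hf self_mem_Ici hx hx) hx

theorem existsUnique_pos_id_mul_eq (hfc : ContinuousOn f (Ici 0)) (hf : MonotoneOn f (Ici 0))
    (hf0 : 0 < f 0) {y : ℝ} (hy : 0 < y) : ∃! x, 0 < x ∧ x * f x = y := by
  obtain ⟨x, hx, rfl⟩ : y ∈ (fun x ↦ x * f x) '' Ioi 0 :=
    intermediate_value_Ioi (continuousOn_id.mul hfc) (tendsto_id_mul_atTop hf hf0)
      (by simpa using hy)
  exact ⟨x, ⟨hx, rfl⟩, fun z ⟨hz, hzx⟩ ↦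
    (strictMonoOn_id_mul hf hf0).injOn hz.le (mem_Ici_of_Ioi hx) hzx⟩

theorem existsUnique_pos_eq_half_mul_exp {G : ℝ → ℝ} (hGc : ContinuousOn G (Ici 0))
    (hG : MonotoneOn G (Ici 0)) {h : ℝ} (hh : 0 < h) :
    ∃! b, 0 < b ∧ h = b / 2 * exp (G b) := by
  have half_mul_exp (b : ℝ) : h = b / 2 * exp (G b) ↔ b * exp (G b) = 2 * h := by
    constructor <;> intro hb <;> linarith
  simpa only [half_mul_exp] using existsUnique_pos_id_mul_eq hGc.rexp
    (exp_monotone.comp_monotoneOn hG) (exp_pos _) (mul_pos two_pos hh)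

end FreeBoundaryEquation

/-- The profile `η ↦ h ∫_η^b exp (-G s) ds`, which for `G 0 = 0` solves `U'' + G' U' = 0` with
flux `-U' 0 = h` and `U b = 0`. The paper's `U_λ` is the case `G s = λ s² / 4`. -/
noncomputable def stationaryProfile (G : ℝ → ℝ) (h b η : ℝ) : ℝ :=
  h * ∫ s in η..b, exp (-G s)

namespace stationaryProfile

variable {G : ℝ → ℝ} {h b : ℝ}

theorem apply_right : stationaryProfile G h b b = 0 := by
  rw [stationaryProfile, intervalIntegral.integral_same, mul_zero]

protected theorem hasDerivAt (hG : Continuous G) (η : ℝ) :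
    HasDerivAt (stationaryProfile G h b) (-(h * exp (-G η))) η := by
  have hexp : Continuous fun s ↦ exp (-G s) := hG.neg.rexp
  rw [← mul_neg]
  exact (intervalIntegral.integral_hasDerivAt_left (hexp.intervalIntegrable η b)
    (hexp.stronglyMeasurableAtFilter _ _) hexp.continuousAt).const_mul h

theorem deriv_eq (hG : Continuous G) :
    deriv (stationaryProfile G h b) = fun η ↦ -(h * exp (-G η)) :=
  funext fun η ↦ (stationaryProfile.hasDerivAt hG η).deriv

theorem deriv_deriv_add_mul_deriv (hG : Continuous G) {η g : ℝ} (hg : HasDerivAt G g η) :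
    deriv (deriv (stationaryProfile G h b)) η + g * deriv (stationaryProfile G h b) η = 0 := by
  rw [deriv_eq hG, (hg.fun_neg.exp.const_mul h).fun_neg.deriv]
  ring

theorem neg_deriv_zero (hG : Continuous G) (hG0 : G 0 = 0) :
    -deriv (stationaryProfile G h b) 0 = h := by
  simp [deriv_eq hG, hG0]

theorem half_eq_neg_deriv_right_iff (hG : Continuous G) :
    b / 2 = -deriv (stationaryProfile G h b) b ↔ h = b / 2 * exp (G b) := by
  rw [deriv_eq hG, neg_neg, exp_neg, ← div_eq_mul_inv, eq_div_iff (exp_ne_zero _), eq_comm]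

end stationaryProfile

theorem hasDerivAt_mul_sq_div_four (c x : ℝ) :
    HasDerivAt (fun s ↦ c * s ^ 2 / 4) (c * x / 2) x :=
  (((hasDerivAt_pow 2 x).const_mul c).div_const 4).congr_deriv (by ring)

theorem monotoneOn_mul_sq_div_four {c : ℝ} (hc : 0 ≤ c) :
    MonotoneOn (fun s ↦ c * s ^ 2 / 4) (Ici 0) := by
  intro x hx y _ hxy
  have hx : 0 ≤ x := hx
  dsimp only
  gcongr

/-- For `λ > 0` and `h̃ > 0`, the equation `h̃ = (x/2) exp (λ x²/4)` has a unique
positive solution `b_λ`, and the pair `(U_λ, b_λ)` with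
`U_λ η = h̃ ∫_η^{b_λ} exp (-λ s²/4) ds` solves the perturbed stationary
problem (2.6). -/
theorem perturbed_stationary_problem
    (lam htil : ℝ) (hlam : 0 < lam) (hhtil : 0 < htil) :
    (∃! b : ℝ, 0 < b ∧ htil = b / 2 * Real.exp (lam * b ^ 2 / 4)) ∧
    (∀ b : ℝ, 0 < b → htil = b / 2 * Real.exp (lam * b ^ 2 / 4) →
      ∀ U : ℝ → ℝ, (∀ η, U η = htil * ∫ s in η..b, Real.exp (-(lam * s ^ 2) / 4)) →
        (∀ η ∈ Set.Ioo 0 b, deriv (deriv U) η + lam * η / 2 * deriv U η = 0) ∧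
        (-deriv U 0 = htil) ∧ (U b = 0) ∧ (b / 2 = -deriv U b)) := by
  have potential_continuous : Continuous fun s ↦ lam * s ^ 2 / 4 := by fun_prop
  refine ⟨existsUnique_pos_eq_half_mul_exp potential_continuous.continuousOn
    (monotoneOn_mul_sq_div_four hlam.le) hhtil, fun b _ hb U hU ↦ ?_⟩
  obtain rfl : U = stationaryProfile (fun s ↦ lam * s ^ 2 / 4) htil b := by
    funext η
    simp only [hU, stationaryProfile, neg_div]
  exact ⟨fun η _ ↦ stationaryProfile.deriv_deriv_add_mul_deriv potential_continuous
      (hasDerivAt_mul_sq_div_four lam η),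
    stationaryProfile.neg_deriv_zero potential_continuous (by simp),
    stationaryProfile.apply_right,
    (stationaryProfile.half_eq_neg_deriv_right_iff potential_continuous).2 hb⟩
end
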